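/- Assume 𝕜 is a principal ideal domain of characteristic 0 and let e := e_0 + e_1 + ⋯ + e_{ℓ−1} ∈ Z, so that eZe = Z̄ is the zigzag algebra and e is e-admissible for the standard basis of Z (for every standard basis element b, ebe = b or ebe = 0, so that ξ^e·T^Z_𝔷(n,d)·ξ^e = T^{Z̄}_{𝔷̄}(n,d) with 𝔷̄ := e𝔷e). Then: (1) e is a double centralizer idempotent for Z, i.e. left multiplication gives an algebra isomorphism Z ≅ End_{eZe}(Ze); and (2) if d ≤ n, then ξ^e is a double centralizer idempotent for T^Z_𝔷(n,d), i.e. left multiplication gives an algebra isomorphism T^Z_𝔷(n,d) ≅ End_{T^{Z̄}_{𝔷̄}(n,d)}(T^Z_𝔷(n,d)·ξ^e). -/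

import Mathlib

open Finset

open scoped Classical TensorProduct

noncomputable section

namespace GS

/-- A *good pair* `(A, 𝔞)`: a `𝕜`-superalgebra `A = ev ⊕ od` which is free as a
`𝕜`-supermodule, together with a subalgebra `𝔞 = aa ⊆ A₀` such that `𝔞` and `A/𝔞` are free,
a complement `𝔠 = cc` of `𝔞` in `A₀`, and an `(A,𝔞)`-basis `B = B_𝔞 ⊔ B_𝔠 ⊔ B_1`
(encoded by `bas : Basis β 𝕜 A` with the partition `part : β → Fin 3`,
where `0` = `B_𝔞`, `1` = `B_𝔠`, `2` = `B_1`). -/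
structure GoodPair (𝕜 A β : Type) [CommRing 𝕜] [NonUnitalRing A] [Module 𝕜 A] : Type where
  ev : Submodule 𝕜 A
  od : Submodule 𝕜 A
  compl : IsCompl ev od
  mul_ee : ∀ a ∈ ev, ∀ b ∈ ev, a * b ∈ ev
  mul_eo : ∀ a ∈ ev, ∀ b ∈ od, a * b ∈ od
  mul_oe : ∀ a ∈ od, ∀ b ∈ ev, a * b ∈ od
  mul_oo : ∀ a ∈ od, ∀ b ∈ od, a * b ∈ ev
  free_ev : Module.Free 𝕜 ev
  free_od : Module.Free 𝕜 od
  aa : Submodule 𝕜 A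
  aa_le_ev : aa ≤ ev
  aa_mul : ∀ a ∈ aa, ∀ b ∈ aa, a * b ∈ aa
  free_aa : Module.Free 𝕜 aa
  free_quot : Module.Free 𝕜 (A ⧸ aa)
  cc : Submodule 𝕜 A
  aa_inf_cc : aa ⊓ cc = ⊥
  aa_sup_cc : aa ⊔ cc = ev
  bas : Module.Basis β 𝕜 A
  part : β → Fin 3
  bas_mem_aa : ∀ i, part i = 0 → bas i ∈ aa
  bas_mem_cc : ∀ i, part i = 1 → bas i ∈ cc
  bas_mem_od : ∀ i, part i = 2 → bas i ∈ od

variable {𝕜 A β : Type} [CommRing 𝕜] [NonUnitalRing A] [Module 𝕜 A]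

/-- An element is homogeneous if it lies in the even or the odd part. -/
def Homog (P : GoodPair 𝕜 A β) (a : A) : Prop := a ∈ P.ev ∨ a ∈ P.od

/-- `H`, the set of nonzero homogeneous elements of `A`. -/
def Hset (P : GoodPair 𝕜 A β) : Set A := {a | Homog P a ∧ a ≠ 0}

/-- `⟨𝐚,𝐜⟩ = #{(k,l) : k > l, a_k odd, c_l odd}` (the Koszul sign count). -/
def koz (od : Submodule 𝕜 A) {d : ℕ} (a c : Fin d → A) : ℕ :=
  (univ.filter fun kl : Fin d × Fin d => kl.2 < kl.1 ∧ a kl.1 ∈ od ∧ c kl.2 ∈ od).card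

/-- `⟨σ;𝐚⟩ = #{(k,l) : k < l, σ⁻¹k > σ⁻¹l, a_k and a_l odd}`. -/
def sgnc (od : Submodule 𝕜 A) {d : ℕ} (σ : Equiv.Perm (Fin d)) (a : Fin d → A) : ℕ :=
  (univ.filter fun kl : Fin d × Fin d =>
    kl.1 < kl.2 ∧ σ⁻¹ kl.2 < σ⁻¹ kl.1 ∧ a kl.1 ∈ od ∧ a kl.2 ∈ od).card

/-- `⟨𝐚,𝐫,𝐬⟩ = #{(k,l) : k < l, a_k, a_l odd, (a_k,r_k,s_k) > (a_l,r_l,s_l)}` with respect to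
the fixed total order `ord` on `A × [1,n] × [1,n]`. -/
def ang {n : ℕ} (od : Submodule 𝕜 A) (ord : LinearOrder (A × Fin n × Fin n))
    {d : ℕ} (a : Fin d → A) (r s : Fin d → Fin n) : ℕ :=
  (univ.filter fun kl : Fin d × Fin d =>
    kl.1 < kl.2 ∧ a kl.1 ∈ od ∧ a kl.2 ∈ od ∧
      ord.lt (a kl.2, r kl.2, s kl.2) (a kl.1, r kl.1, s kl.1)).card

/-- `(𝐚,𝐫,𝐬) ∈ Tri^H(n,d)`: all entries are nonzero homogeneous, and a repeated entry
triple forces evenness. -/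
def IsTriH (P : GoodPair 𝕜 A β) {n d : ℕ} (a : Fin d → A) (r s : Fin d → Fin n) : Prop :=
  (∀ k, a k ∈ Hset P) ∧
    ∀ k l : Fin d, k ≠ l → (a k, r k, s k) = (a l, r l, s l) → a k ∈ P.ev

/-- `(𝐛,𝐫,𝐬) ∈ Tri^B(n,d)` for words of basis elements. -/
def IsTriB (P : GoodPair 𝕜 A β) {n d : ℕ} (b : Fin d → β) (r s : Fin d → Fin n) : Prop :=
  ∀ k l : Fin d, k ≠ l → ((b k, r k, s k) : β × Fin n × Fin n) = (b l, r l, s l) →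
    P.part (b k) ≠ 2

/-- Minimal length representatives of the cosets `(S_e × S_f)\S_{e+f}`. -/
def IsShuffle (e f : ℕ) (σ : Equiv.Perm (Fin (e + f))) : Prop :=
  (∀ k l : Fin (e + f), k < l → (l : ℕ) < e → σ⁻¹ k < σ⁻¹ l) ∧
  (∀ k l : Fin (e + f), k < l → e ≤ (k : ℕ) → σ⁻¹ k < σ⁻¹ l)

/-- The tower of superalgebras `M_n(A)^{⊗d}`, `d ≥ 0`, axiomatised.  `X a r s` is the pure
tensor `ξ^{a_1}_{r_1,s_1} ⊗ ⋯ ⊗ ξ^{a_d}_{r_d,s_d}` of matrix units; it is multilinear in the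
`A`-entries, the pure tensors of basis elements form a basis, multiplication is the sign-twisted
(Koszul) componentwise one, `act` is the right action of the symmetric groups by superalgebra
automorphisms, `evT/odT` is the induced supermodule structure, `star` is the `*`-(shuffle)
product and `nab` gives the components of the deconcatenation coproduct `∇`. -/
structure Tower (𝕜 A β : Type) [CommRing 𝕜] [NonUnitalRing A] [Module 𝕜 A]
    (n : ℕ) (T : ℕ → Type) [∀ e, NonUnitalRing (T e)] [∀ e, Module 𝕜 (T e)]
    (P : GoodPair 𝕜 A β) : Type where
  X : ∀ {e : ℕ}, (Fin e → A) → (Fin e → Fin n) → (Fin e → Fin n) → T e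
  X_update_add : ∀ {e : ℕ} (a : Fin e → A) (r s : Fin e → Fin n) (k : Fin e) (x y : A),
    X (Function.update a k (x + y)) r s
      = X (Function.update a k x) r s + X (Function.update a k y) r s
  X_update_smul : ∀ {e : ℕ} (a : Fin e → A) (r s : Fin e → Fin n) (k : Fin e) (c : 𝕜) (x : A),
    X (Function.update a k (c • x)) r s = c • X (Function.update a k x) r s
  bas : ∀ e : ℕ, Module.Basis ((Fin e → β) × (Fin e → Fin n) × (Fin e → Fin n)) 𝕜 (T e)
  bas_eq : ∀ (e : ℕ) (b : Fin e → β) (r s : Fin e → Fin n),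
    bas e (b, r, s) = X (fun k => P.bas (b k)) r s
  X_mul : ∀ {e : ℕ} (a c : Fin e → A) (r s t u : Fin e → Fin n),
    (∀ k, Homog P (a k)) → (∀ k, Homog P (c k)) →
    X a r s * X c t u
      = if s = t then ((-1 : ℤ) ^ koz P.od a c) • X (fun k => a k * c k) r u else 0
  act : ∀ {e : ℕ}, Equiv.Perm (Fin e) → T e →ₗ[𝕜] T e
  act_act : ∀ {e : ℕ} (σ τ : Equiv.Perm (Fin e)) (x : T e), act τ (act σ x) = act (σ * τ) x
  act_mul : ∀ {e : ℕ} (σ : Equiv.Perm (Fin e)) (x y : T e), act σ (x * y) = act σ x * act σ y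
  act_X : ∀ {e : ℕ} (σ : Equiv.Perm (Fin e)) (a : Fin e → A) (r s : Fin e → Fin n),
    (∀ k, Homog P (a k)) →
    act σ (X a r s) = ((-1 : ℤ) ^ sgnc P.od σ a) • X (a ∘ σ) (r ∘ σ) (s ∘ σ)
  evT : ∀ e : ℕ, Submodule 𝕜 (T e)
  odT : ∀ e : ℕ, Submodule 𝕜 (T e)
  complT : ∀ e : ℕ, IsCompl (evT e) (odT e)
  X_mem_evT : ∀ {e : ℕ} (a : Fin e → A) (r s : Fin e → Fin n), (∀ k, Homog P (a k)) →
    Even (univ.filter fun k => a k ∈ P.od).card → X a r s ∈ evT e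
  X_mem_odT : ∀ {e : ℕ} (a : Fin e → A) (r s : Fin e → Fin n), (∀ k, Homog P (a k)) →
    ¬ Even (univ.filter fun k => a k ∈ P.od).card → X a r s ∈ odT e
  star : ∀ {e f : ℕ}, T e →ₗ[𝕜] T f →ₗ[𝕜] T (e + f)
  star_X : ∀ {e f : ℕ} (a : Fin e → A) (r s : Fin e → Fin n)
      (c : Fin f → A) (t u : Fin f → Fin n),
    star (X a r s) (X c t u)
      = ∑ σ ∈ univ.filter (IsShuffle e f),
          act σ (X (Fin.append a c) (Fin.append r t) (Fin.append s u))
  nab : ∀ e f : ℕ, T (e + f) →ₗ[𝕜] TensorProduct 𝕜 (T e) (T f)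
  nab_X : ∀ (e f : ℕ) (a : Fin (e + f) → A) (r s : Fin (e + f) → Fin n),
    nab e f (X a r s)
      = (X (a ∘ Fin.castAdd f) (r ∘ Fin.castAdd f) (s ∘ Fin.castAdd f))
          ⊗ₜ[𝕜] (X (a ∘ Fin.natAdd e) (r ∘ Fin.natAdd e) (s ∘ Fin.natAdd e))

variable {n : ℕ} {T : ℕ → Type} [∀ e, NonUnitalRing (T e)] [∀ e, Module 𝕜 (T e)]

/-- `ξ^𝐚_{𝐫,𝐬}`, the signed sum of the pure tensors over the `S_d`-orbit of `(𝐚,𝐫,𝐬)`. -/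
def xiH {P : GoodPair 𝕜 A β} (D : Tower 𝕜 A β n T P) (ord : LinearOrder (A × Fin n × Fin n))
    {d : ℕ} (a : Fin d → A) (r s : Fin d → Fin n) : T d :=
  ∑ w ∈ (univ.image fun σ : Equiv.Perm (Fin d) => (a ∘ σ, r ∘ σ, s ∘ σ)),
    ((-1 : ℤ) ^ (ang P.od ord a r s + ang P.od ord w.1 w.2.1 w.2.2)) • D.X w.1 w.2.1 w.2.2

/-- `ξ^𝐛_{𝐫,𝐬}` for a word `𝐛` of basis elements. -/
def xiB {P : GoodPair 𝕜 A β} (D : Tower 𝕜 A β n T P) (ord : LinearOrder (A × Fin n × Fin n))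
    {d : ℕ} (b : Fin d → β) (r s : Fin d → Fin n) : T d :=
  xiH D ord (fun k => P.bas (b k)) r s

/-- `[𝐛,𝐫,𝐬]^b_{r,s}`, the multiplicity of an entry triple in a word triple. -/
def mco {n d : ℕ} (b : Fin d → β) (r s : Fin d → Fin n) (w : β × Fin n × Fin n) : ℕ :=
  (univ.filter fun k => ((b k, r k, s k) : β × Fin n × Fin n) = w).card

/-- `∏ ([𝐛,𝐫,𝐬]^b_{r,s})!` over the entry triples whose basis element satisfies `sel`
(e.g. `sel i = (part i = 1)` gives `[𝐛,𝐫,𝐬]^!_𝔠`). -/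
def facSel (sel : β → Prop) {n d : ℕ} (b : Fin d → β) (r s : Fin d → Fin n) : ℕ :=
  ∏ w ∈ ((univ.image fun k => ((b k, r k, s k) : β × Fin n × Fin n)).filter fun w => sel w.1),
    Nat.factorial (mco b r s w)

/-- `η^𝐛_{𝐫,𝐬} := [𝐛,𝐫,𝐬]^!_𝔠 • ξ^𝐛_{𝐫,𝐬}`. -/
def eta {P : GoodPair 𝕜 A β} (D : Tower 𝕜 A β n T P) (ord : LinearOrder (A × Fin n × Fin n))
    {d : ℕ} (b : Fin d → β) (r s : Fin d → Fin n) : T d :=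
  facSel (fun i => P.part i = 1) b r s • xiB D ord b r s

/-- `S^A(n,d) = (M_n(A)^{⊗d})^{S_d}`, the invariants. -/
def SchurS {P : GoodPair 𝕜 A β} (D : Tower 𝕜 A β n T P) (d : ℕ) : Submodule 𝕜 (T d) where
  carrier := {x | ∀ σ : Equiv.Perm (Fin d), D.act σ x = x}
  add_mem' := by
    intro x y hx hy σ
    rw [map_add, hx σ, hy σ]
  zero_mem' := by
    intro σ; exact map_zero _
  smul_mem' := by
    intro c x hx σ
    rw [map_smul, hx σ]

/-- The generalized Schur algebra `T^A_𝔞(n,d)`, the `𝕜`-span of the `η^𝐛_{𝐫,𝐬}`,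
`(𝐛,𝐫,𝐬) ∈ Tri^B(n,d)`. -/
def SchurT {P : GoodPair 𝕜 A β} (D : Tower 𝕜 A β n T P) (ord : LinearOrder (A × Fin n × Fin n))
    (d : ℕ) : Submodule 𝕜 (T d) :=
  Submodule.span 𝕜 {x | ∃ b r s, IsTriB P b r s ∧ x = eta D ord b r s}

/-- `S^𝔞(n,d) = (M_n(𝔞)^{⊗d})^{S_d} ⊆ S^A(n,d)`. -/
def SchurA {P : GoodPair 𝕜 A β} (D : Tower 𝕜 A β n T P) (d : ℕ) : Submodule 𝕜 (T d) :=
  Submodule.span 𝕜 {x | ∃ a r s, (∀ k, a k ∈ P.aa) ∧ x = D.X a r s} ⊓ SchurS D d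

/-- `ξ^f = E^f ⊗ ⋯ ⊗ E^f` for `f ∈ A`. -/
def xiIdem {P : GoodPair 𝕜 A β} (D : Tower 𝕜 A β n T P) (f : A) (d : ℕ) : T d :=
  ∑ r : Fin d → Fin n, D.X (fun _ => f) r r

/-- Transport along an equality of degrees. -/
def tcast {e f : ℕ} (h : e = f) : T e ≃ₗ[𝕜] T f := by
  subst h; exact LinearEquiv.refl 𝕜 (T e)

/-- Iterated `*`-product `x_1 * x_2 * ⋯ * x_d` of degree-one pure tensors read off from a
word (associated to the left). -/
def starIter {P : GoodPair 𝕜 A β} (D : Tower 𝕜 A β n T P) :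
    ∀ (e : ℕ), (Fin e → A) → (Fin e → Fin n) → (Fin e → Fin n) → T e
  | 0, _, _, _ => D.X Fin.elim0 Fin.elim0 Fin.elim0
  | (e + 1), a, r, s =>
      D.star (starIter D e (a ∘ Fin.castSucc) (r ∘ Fin.castSucc) (s ∘ Fin.castSucc))
        (D.X (fun _ : Fin 1 => a (Fin.last e)) (fun _ => r (Fin.last e)) (fun _ => s (Fin.last e)))

/-- Iterated `*`-product of blockwise given elements. -/
def starBlocks {P : GoodPair 𝕜 A β} (D : Tower 𝕜 A β n T P) :
    ∀ (q : ℕ) (sz : Fin q → ℕ), (∀ m, T (sz m)) → T (∑ m, sz m)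
  | 0, sz, _ => cast (congrArg T (Fin.sum_univ_zero sz).symm) (D.X Fin.elim0 Fin.elim0 Fin.elim0)
  | (q + 1), sz, x =>
      cast (congrArg T (Fin.sum_univ_castSucc sz).symm)
        (D.star (starBlocks D q (fun m => sz m.castSucc) (fun m => x m.castSucc))
          (x (Fin.last q)))

/-- Concatenation of a tuple of words of lengths `sz 0, …, sz (q-1)`. -/
def concatB {α : Type} : ∀ {q : ℕ} (sz : Fin q → ℕ), (∀ m, Fin (sz m) → α) → Fin (∑ m, sz m) → α
  | 0, sz, _ => fun k => Fin.elim0 (cast (congrArg Fin (Fin.sum_univ_zero sz)) k)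
  | (q + 1), sz, f => fun k =>
      Fin.append (concatB (fun m => sz m.castSucc) (fun m => f m.castSucc)) (f (Fin.last q))
        (cast (congrArg Fin (Fin.sum_univ_castSucc sz)) k)

/-- A triple of words `(𝐛,𝐫,𝐬)`. -/
abbrev WordTriple (β : Type) (n d : ℕ) : Type :=
  (Fin d → β) × (Fin d → Fin n) × (Fin d → Fin n)

/-- The diagonal right place-permutation action on triples of words. -/
def wAct {d : ℕ} (w : WordTriple β n d) (σ : Equiv.Perm (Fin d)) : WordTriple β n d :=
  (w.1 ∘ σ, w.2.1 ∘ σ, w.2.2 ∘ σ)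

/-- The `k`-th entry triple `(b_k, r_k, s_k)` (with `b_k` realized in `A`). -/
def entryAt (P : GoodPair 𝕜 A β) {n d : ℕ} (w : WordTriple β n d) (k : Fin d) :
    A × Fin n × Fin n :=
  (P.bas (w.1 k), w.2.1 k, w.2.2 k)

/-- The lexicographic order on triples of words induced by the total order `ord`. -/
def wordLE (P : GoodPair 𝕜 A β) {n : ℕ} (ord : LinearOrder (A × Fin n × Fin n)) {d : ℕ}
    (w w' : WordTriple β n d) : Prop :=
  (∀ k, entryAt P w k = entryAt P w' k) ∨
    ∃ l : Fin d, (∀ k, k < l → entryAt P w k = entryAt P w' k) ∧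
      ord.lt (entryAt P w l) (entryAt P w' l)

/-- `Tri^B_0(n,d)`: the lexicographically minimal representatives of the `S_d`-orbits on
`Tri^B(n,d)`. -/
def IsTri0 (P : GoodPair 𝕜 A β) {n : ℕ} (ord : LinearOrder (A × Fin n × Fin n)) {d : ℕ}
    (w : WordTriple β n d) : Prop :=
  IsTriB P w.1 w.2.1 w.2.2 ∧ ∀ σ : Equiv.Perm (Fin d), wordLE P ord w (wAct w σ)

/-- The first `l` letters of each word. -/
def firstW {d : ℕ} (l : ℕ) (hl : l ≤ d) (w : WordTriple β n d) : WordTriple β n l :=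
  (fun k => w.1 ⟨k, lt_of_lt_of_le k.isLt hl⟩,
   fun k => w.2.1 ⟨k, lt_of_lt_of_le k.isLt hl⟩,
   fun k => w.2.2 ⟨k, lt_of_lt_of_le k.isLt hl⟩)

/-- The last `d - l` letters of each word. -/
def lastW {d : ℕ} (l : ℕ) (hl : l ≤ d) (w : WordTriple β n d) : WordTriple β n (d - l) :=
  (fun k => w.1 ⟨l + (k : ℕ), by have := k.isLt; omega⟩,
   fun k => w.2.1 ⟨l + (k : ℕ), by have := k.isLt; omega⟩,
   fun k => w.2.2 ⟨l + (k : ℕ), by have := k.isLt; omega⟩)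

/-- Concatenation of words. -/
def appF {α : Type} {d : ℕ} (l : ℕ) (hl : l ≤ d) (f : Fin l → α) (g : Fin (d - l) → α) :
    Fin d → α :=
  fun k => if hk : (k : ℕ) < l then f ⟨k, hk⟩ else g ⟨(k : ℕ) - l, by have := k.isLt; omega⟩

/-- Concatenation `T¹T²` of two triples of words. -/
def concatW {d : ℕ} (l : ℕ) (hl : l ≤ d) (p : WordTriple β n l × WordTriple β n (d - l)) :
    WordTriple β n d :=
  (appF l hl p.1.1 p.2.1, appF l hl p.1.2.1 p.2.2.1, appF l hl p.1.2.2 p.2.2.2)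

/-- `Spl_l(T)`, the set of `l`-splits of `T ∈ Tri^B_0(n,d)`. -/
def splitsF (P : GoodPair 𝕜 A β) {n : ℕ} (ord : LinearOrder (A × Fin n × Fin n)) {d : ℕ}
    (l : ℕ) (hl : l ≤ d) (w : WordTriple β n d) :
    Finset (WordTriple β n l × WordTriple β n (d - l)) :=
  (univ.image fun σ : Equiv.Perm (Fin d) =>
      (firstW l hl (wAct w σ), lastW l hl (wAct w σ))).filter
    fun p => IsTri0 P ord p.1 ∧ IsTri0 P ord p.2

/-- The number of inversions (= Coxeter length) of a permutation. -/
def invCount {d : ℕ} (σ : Equiv.Perm (Fin d)) : ℕ :=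
  (univ.filter fun kl : Fin d × Fin d => kl.1 < kl.2 ∧ σ kl.2 < σ kl.1).card

/-- The submodule `{x | x·ε = x}` (for an idempotent `ε` this is `R·ε`). -/
def rfix (𝕜 : Type) {R : Type} [CommRing 𝕜] [NonUnitalRing R] [Module 𝕜 R]
    [IsScalarTower 𝕜 R R] (ε : R) : Submodule 𝕜 R where
  carrier := {x | x * ε = x}
  add_mem' := by
    intro x y hx hy
    simp only [Set.mem_setOf_eq] at *
    rw [add_mul, hx, hy]
  zero_mem' := by simp
  smul_mem' := by
    intro c x hx
    simp only [Set.mem_setOf_eq] at *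
    rw [smul_mul_assoc, hx]

/-- Right `εSε`-module endomorphism property for a map of `S·ε = M ⊓ rfix ε`,
where `S` is the (possibly non-unital) algebra realized as the submodule `M` of `R`. -/
def IsEquivar (𝕜 : Type) {R : Type} [CommRing 𝕜] [NonUnitalRing R] [Module 𝕜 R]
    [IsScalarTower 𝕜 R R] (M : Submodule 𝕜 R) (ε : R)
    (f : ↥(M ⊓ rfix 𝕜 ε) →ₗ[𝕜] ↥(M ⊓ rfix 𝕜 ε)) : Prop :=
  ∀ (x : ↥(M ⊓ rfix 𝕜 ε)) (c : R), c ∈ M → ε * c * ε = c →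
    ∀ h : (x : R) * c ∈ M ⊓ rfix 𝕜 ε,
      ((f ⟨(x : R) * c, h⟩ : ↥(M ⊓ rfix 𝕜 ε)) : R) = (f x : R) * c

/-- `ε` is a *double centralizer idempotent* for the algebra `M ⊆ R`: the left
multiplication map `λ : M → End_{εMε}(Mε)` is bijective. -/
def IsDCI (𝕜 : Type) {R : Type} [CommRing 𝕜] [NonUnitalRing R] [Module 𝕜 R]
    [IsScalarTower 𝕜 R R] (M : Submodule 𝕜 R) (ε : R) : Prop :=
  (∀ s ∈ M, ∀ s' ∈ M, (∀ x ∈ M ⊓ rfix 𝕜 ε, s * x = s' * x) → s = s') ∧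
  (∀ f : ↥(M ⊓ rfix 𝕜 ε) →ₗ[𝕜] ↥(M ⊓ rfix 𝕜 ε), IsEquivar 𝕜 M ε f →
    ∃ s ∈ M, ∀ x : ↥(M ⊓ rfix 𝕜 ε), (f x : R) = s * (x : R))

set_option linter.unusedSectionVars false

section Basics

variable {K Z I : Type} [CommRing K] [IsDomain K] [CharZero K] [Ring Z] [Algebra K Z]

theorem bas_ev {P : GoodPair K Z I} {i : I} (h : P.part i ≠ 2) : P.bas i ∈ P.ev := by
  have h3 : P.part i = 0 ∨ P.part i = 1 ∨ P.part i = 2 := by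
    generalize P.part i = x
    revert x
    decide
  rcases h3 with h0 | h1 | h2
  · exact P.aa_le_ev (P.bas_mem_aa i h0)
  · rw [← P.aa_sup_cc]
    exact Submodule.mem_sup_right (P.bas_mem_cc i h1)
  · exact absurd h2 h

theorem homog_bas (P : GoodPair K Z I) (i : I) : Homog P (P.bas i) := by
  by_cases h : P.part i = 2
  · exact Or.inr (P.bas_mem_od i h)
  · exact Or.inl (bas_ev h)

theorem eq_zero_of_ev_od {P : GoodPair K Z I} {a : Z} (h1 : a ∈ P.ev) (h2 : a ∈ P.od) : a = 0 := by
  have := P.compl.disjoint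
  rw [Submodule.disjoint_def] at this
  exact this a h1 h2

theorem od_bas_iff {P : GoodPair K Z I} {i : I} : P.bas i ∈ P.od ↔ P.part i = 2 := by
  constructor
  · intro h
    by_contra h2
    exact P.bas.ne_zero i (eq_zero_of_ev_od (bas_ev h2) h)
  · exact P.bas_mem_od i

theorem homog_mul {P : GoodPair K Z I} {a b : Z} (ha : Homog P a) (hb : Homog P b) :
    Homog P (a * b) := by
  rcases ha with ha | ha <;> rcases hb with hb | hb
  · exact Or.inl (P.mul_ee _ ha _ hb)
  · exact Or.inr (P.mul_eo _ ha _ hb)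
  · exact Or.inr (P.mul_oe _ ha _ hb)
  · exact Or.inl (P.mul_oo _ ha _ hb)

theorem zsg {M : Type} [AddCommGroup M] [Module K M] (k : ℕ) (x : M) :
    ((-1 : ℤ) ^ k) • x = ((-1 : K) ^ k) • x := by
  rcases Nat.even_or_odd k with h | h <;> simp [h.neg_one_pow]

variable {P : GoodPair K Z I} {m : ℕ} {R : ℕ → Type} [∀ e, Ring (R e)] [∀ e, Algebra K (R e)]
  (D : Tower K Z I m R P)

/-- `X` as a multilinear map. -/
def Xml {d : ℕ} (r s : Fin d → Fin m) : MultilinearMap K (fun _ : Fin d => Z) (R d) where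
  toFun a := D.X a r s
  map_update_add' := by
    intro inst a i x y
    have : inst = instDecidableEqFin d := Subsingleton.elim _ _
    subst this
    convert D.X_update_add a r s i x y using 3
  map_update_smul' := by
    intro inst a i c x
    have : inst = instDecidableEqFin d := Subsingleton.elim _ _
    subst this
    convert D.X_update_smul a r s i c x using 3

theorem X_eq_zero {d : ℕ} (a : Fin d → Z) (r s : Fin d → Fin m) (k : Fin d) (h : a k = 0) :
    D.X a r s = 0 :=
  (Xml D r s).map_coord_zero k h

theorem Xcoord [Fintype I] {d : ℕ} (a : Fin d → Z) (r s : Fin d → Fin m) (b : Fin d → I)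
    (r' s' : Fin d → Fin m) :
    (D.bas d).repr (D.X a r s) (b, r', s')
      = if r = r' ∧ s = s' then ∏ k, P.bas.repr (a k) (b k) else 0 := by
  let L : MultilinearMap K (fun _ : Fin d => Z) K :=
    ((D.bas d).coord (b, r', s')).compMultilinearMap (Xml D r s)
  let M : MultilinearMap K (fun _ : Fin d => Z) K :=
    (if r = r' ∧ s = s' then (1 : K) else 0) •
      (MultilinearMap.mkPiAlgebra K (Fin d) K).compLinearMap (fun k => P.bas.coord (b k))
  have hLM : L = M := by
    refine Module.Basis.ext_multilinear (fun _ => P.bas) ?_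
    intro v
    have h1 : L (fun i => P.bas (v i)) = (D.bas d).repr (D.X (fun i => P.bas (v i)) r s) (b, r', s') := rfl
    have h2 : M (fun i => P.bas (v i)) = (if r = r' ∧ s = s' then (1 : K) else 0) *
      ∏ k, P.bas.repr (P.bas (v k)) (b k) := by
      simp only [M]
      split_ifs <;> simp
    rw [h1, h2, ← D.bas_eq, Module.Basis.repr_self]
    simp only [Finsupp.single_apply, Module.Basis.repr_self, Prod.mk.injEq]
    rw [Finset.prod_ite_zero]
    simp only [Finset.prod_const_one, Finset.mem_univ, true_implies, funext_iff]
    split_ifs <;> simp_all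
  have := congrArg (fun F : MultilinearMap K (fun _ : Fin d => Z) K => F a) hLM
  have h1 : L a = (D.bas d).repr (D.X a r s) (b, r', s') := rfl
  have h2 : M a = (if r = r' ∧ s = s' then (1 : K) else 0) *
      ∏ k, P.bas.repr (a k) (b k) := by
      simp only [M]
      split_ifs <;> simp
  simp only [h1, h2] at this
  rw [this]
  split_ifs <;> simp

theorem mulcoef [Fintype I] {d : ℕ} (x : R d) (a : Fin d → Z) (s t : Fin d → Fin m)
    (ha : ∀ k, Homog P (a k)) (b' : Fin d → I) (r' t' : Fin d → Fin m) :
    (D.bas d).repr (x * D.X a s t) (b', r', t')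
      = if t = t' then ∑ b : Fin d → I, ((-1 : K) ^ koz P.od (fun k => P.bas (b k)) a) *
          (D.bas d).repr x (b, r', s) * ∏ k, P.bas.repr (P.bas (b k) * a k) (b' k) else 0 := by
  conv_lhs => rw [← (D.bas d).sum_repr x]
  rw [Finset.sum_mul, map_sum, Finsupp.finsetSum_apply, Fintype.sum_prod_type]
  have key : ∀ (b : Fin d → I) (r s0 : Fin d → Fin m),
      (D.bas d).repr (((D.bas d).repr x (b, r, s0)) • (D.bas d) (b, r, s0) * D.X a s t) (b', r', t')
      = if s0 = s then if r = r' then if t = t' then ((-1 : K) ^ koz P.od (fun k => P.bas (b k)) a) *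
          (D.bas d).repr x (b, r', s) * ∏ k, P.bas.repr (P.bas (b k) * a k) (b' k) else 0 else 0 else 0 := by
    intro b r s0
    rw [smul_mul_assoc, D.bas_eq, D.X_mul _ _ _ _ _ _ (fun k => homog_bas P _) ha]
    by_cases h1 : s0 = s
    · subst h1
      simp only [if_true]
      have h3 : ((-1 : ℤ) ^ koz P.od (fun k => P.bas (b k)) a) • D.X (fun k => P.bas (b k) * a k) r t
         = ((-1 : K) ^ koz P.od (fun k => P.bas (b k)) a) • D.X (fun k => P.bas (b k) * a k) r t := by
        exact zsg _ _
      rw [h3]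
      simp only [map_smul, Finsupp.smul_apply, smul_eq_mul, Xcoord]
      split_ifs <;> simp_all
      ring
    · simp [h1]
  simp_rw [Fintype.sum_prod_type, key]
  simp only [Finset.sum_ite_eq', Finset.mem_univ, if_true]
  split_ifs <;> simp

theorem coef_zero_col [Fintype I] {d : ℕ} (x : R d) (a : Fin d → Z) (s t : Fin d → Fin m)
    (ha : ∀ k, Homog P (a k)) (b' : Fin d → I) (r' t' : Fin d → Fin m) (h : t ≠ t') :
    (D.bas d).repr (x * D.X a s t) (b', r', t') = 0 := by
  rw [mulcoef D x a s t ha, if_neg h]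

theorem coef_zero_at [Fintype I] {d : ℕ} (x : R d) (a : Fin d → Z) (s t : Fin d → Fin m)
    (ha : ∀ k, Homog P (a k)) (b' : Fin d → I) (r' t' : Fin d → Fin m) (k : Fin d)
    (h : ∀ b, P.bas.repr (P.bas b * a k) (b' k) = 0) :
    (D.bas d).repr (x * D.X a s t) (b', r', t') = 0 := by
  rw [mulcoef D x a s t ha]
  split_ifs with ht
  · refine Finset.sum_eq_zero fun b _ => ?_
    rw [Finset.prod_eq_zero (Finset.mem_univ k) (h _), mul_zero]
  · rfl

theorem coef_unique [Fintype I] {d : ℕ} (x : R d) (a : Fin d → Z) (s t : Fin d → Fin m)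
    (ha : ∀ k, Homog P (a k)) (b' : Fin d → I) (r' : Fin d → Fin m) (b0 : Fin d → I)
    (h : ∀ k b, P.bas.repr (P.bas b * a k) (b' k) = if b = b0 k then 1 else 0) :
    (D.bas d).repr (x * D.X a s t) (b', r', t)
      = ((-1 : K) ^ koz P.od (fun k => P.bas (b0 k)) a) * (D.bas d).repr x (b0, r', s) := by
  rw [mulcoef D x a s t ha, if_pos rfl, Finset.sum_eq_single b0]
  · simp [h]
  · intro b _ hb
    obtain ⟨k, hk⟩ := Function.ne_iff.mp hb
    rw [Finset.prod_eq_zero (Finset.mem_univ k), mul_zero]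
    rw [h, if_neg hk]
  · simp

theorem coef_unique_eq_zero [Fintype I] {d : ℕ} (x : R d) (a : Fin d → Z) (s t : Fin d → Fin m)
    (ha : ∀ k, Homog P (a k)) (b' : Fin d → I) (r' : Fin d → Fin m) (b0 : Fin d → I)
    (h : ∀ k b, P.bas.repr (P.bas b * a k) (b' k) = if b = b0 k then 1 else 0)
    (h0 : (D.bas d).repr (x * D.X a s t) (b', r', t) = 0) :
    (D.bas d).repr x (b0, r', s) = 0 := by
  rw [coef_unique D x a s t ha b' r' b0 h] at h0
  rcases mul_eq_zero.mp h0 with h1 | h1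
  · exact absurd h1 (pow_ne_zero _ (neg_ne_zero.mpr one_ne_zero))
  · exact h1

theorem act_coef [Fintype I] {d : ℕ} (σ : Equiv.Perm (Fin d)) (x : R d) (b : Fin d → I)
    (r s : Fin d → Fin m) :
    (D.bas d).repr (D.act σ x) (b ∘ σ, r ∘ σ, s ∘ σ)
      = ((-1 : K) ^ sgnc P.od σ (fun k => P.bas (b k))) * (D.bas d).repr x (b, r, s) := by
  conv_lhs => rw [← (D.bas d).sum_repr x]
  rw [map_sum, map_sum, Finsupp.finsetSum_apply, Finset.sum_eq_single (b, r, s)]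
  · rw [map_smul, D.bas_eq, D.act_X _ _ _ _ (fun k => homog_bas P _), zsg (K := K)]
    have : D.X ((fun k => P.bas (b k)) ∘ σ) (r ∘ σ) (s ∘ σ) = D.bas d (b ∘ σ, r ∘ σ, s ∘ σ) := by
      rw [D.bas_eq]; rfl
    rw [this]
    simp [mul_comm]
  · rintro ⟨b1, r1, s1⟩ _ hne
    rw [map_smul, D.bas_eq, D.act_X _ _ _ _ (fun k => homog_bas P _), zsg (K := K)]
    have : D.X ((fun k => P.bas (b1 k)) ∘ σ) (r1 ∘ σ) (s1 ∘ σ) = D.bas d (b1 ∘ σ, r1 ∘ σ, s1 ∘ σ) := by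
      rw [D.bas_eq]; rfl
    rw [this]
    have h2 : (b1 ∘ σ, r1 ∘ σ, s1 ∘ σ) ≠ (b ∘ σ, r ∘ σ, s ∘ σ) := by
      intro h
      simp only [Prod.mk.injEq, σ.surjective.right_cancellable] at h
      exact hne (by simp [h])
    simp [Finsupp.single_apply, h2]
  · simp

/-- coefficient vanishing criterion. -/
theorem eq_of_coef {d : ℕ} (x y : R d)
    (h : ∀ b r s, (D.bas d).repr x (b, r, s) = (D.bas d).repr y (b, r, s)) : x = y := by
  apply (D.bas d).repr.injective
  ext ⟨b, r, s⟩
  exact h b r s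

theorem sgnc_ev {d : ℕ} (σ : Equiv.Perm (Fin d)) (a : Fin d → Z) (h : ∀ k, a k ∈ P.ev)
    (h0 : ∀ k, a k ≠ 0) : sgnc P.od σ a = 0 := by
  unfold sgnc
  rw [Finset.card_eq_zero, Finset.filter_eq_empty_iff]
  rintro kl - ⟨_, _, h1, _⟩
  exact h0 _ (eq_zero_of_ev_od (h _) h1)

theorem koz_ev_left {d : ℕ} (a c : Fin d → Z) (h : ∀ k, a k ∈ P.ev)
    (h0 : ∀ k, a k ≠ 0) : koz P.od a c = 0 := by
  unfold koz
  rw [Finset.card_eq_zero, Finset.filter_eq_empty_iff]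
  rintro kl - ⟨_, h1, _⟩
  exact h0 _ (eq_zero_of_ev_od (h _) h1)

theorem koz_ev_right {d : ℕ} (a c : Fin d → Z) (h : ∀ k, c k ∈ P.ev)
    (h0 : ∀ k, c k ≠ 0) : koz P.od a c = 0 := by
  unfold koz
  rw [Finset.card_eq_zero, Finset.filter_eq_empty_iff]
  rintro kl - ⟨_, _, h1⟩
  exact h0 _ (eq_zero_of_ev_od (h _) h1)

end Basics


set_option linter.unusedSectionVars false

section Signs

theorem inv_parity {d : ℕ} {τ : Type} (lt : τ → τ → Prop) (t : Fin d → τ) (O : Fin d → Prop)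
    (hasym : ∀ x y, lt x y → ¬ lt y x)
    (htri : ∀ p q, O p → O q → p ≠ q → lt (t p) (t q) ∨ lt (t q) (t p))
    (σ : Equiv.Perm (Fin d)) :
    ∃ c : ℕ,
      (univ.filter fun kl : Fin d × Fin d =>
        kl.1 < kl.2 ∧ O (σ kl.1) ∧ O (σ kl.2) ∧ lt (t (σ kl.2)) (t (σ kl.1))).card +
      (univ.filter fun kl : Fin d × Fin d =>
        kl.1 < kl.2 ∧ O kl.1 ∧ O kl.2 ∧ lt (t kl.2) (t kl.1)).card
      = (univ.filter fun kl : Fin d × Fin d =>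
        kl.1 < kl.2 ∧ σ⁻¹ kl.2 < σ⁻¹ kl.1 ∧ O kl.1 ∧ O kl.2).card + 2 * c := by
  set S1 := (univ.filter fun kl : Fin d × Fin d =>
        kl.1 < kl.2 ∧ O kl.1 ∧ O kl.2 ∧ lt (t kl.2) (t kl.1)) with hS1
  set S2 := (univ.filter fun kl : Fin d × Fin d =>
        σ⁻¹ kl.1 < σ⁻¹ kl.2 ∧ O kl.1 ∧ O kl.2 ∧ lt (t kl.2) (t kl.1)) with hS2
  set S3 := (univ.filter fun kl : Fin d × Fin d =>
        kl.1 < kl.2 ∧ σ⁻¹ kl.2 < σ⁻¹ kl.1 ∧ O kl.1 ∧ O kl.2) with hS3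
  have h2 : (univ.filter fun kl : Fin d × Fin d =>
        kl.1 < kl.2 ∧ O (σ kl.1) ∧ O (σ kl.2) ∧ lt (t (σ kl.2)) (t (σ kl.1))).card = S2.card := by
    apply Finset.card_equiv (Equiv.prodCongr σ σ)
    rintro ⟨p, q⟩
    simp [hS2]
  have h3a : S3.filter (fun kl => lt (t kl.2) (t kl.1)) = S1 \ S2 := by
    ext ⟨p, q⟩
    simp only [hS1, hS2, hS3, mem_filter, mem_univ, true_and, mem_sdiff]
    constructor
    · rintro ⟨⟨h1, h2, h3, h4⟩, h5⟩
      exact ⟨⟨h1, h3, h4, h5⟩, fun h => absurd h.1 (not_lt.mpr h2.le)⟩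
    · rintro ⟨⟨h1, h3, h4, h5⟩, h6⟩
      refine ⟨⟨h1, ?_, h3, h4⟩, h5⟩
      rcases lt_trichotomy (σ⁻¹ p) (σ⁻¹ q) with h | h | h
      · exact absurd ⟨h, h3, h4, h5⟩ h6
      · exact absurd (σ⁻¹.injective h) h1.ne
      · exact h
  have h3b : (S3.filter (fun kl => ¬ lt (t kl.2) (t kl.1))).card = (S2 \ S1).card := by
    apply Finset.card_equiv (Equiv.prodComm _ _)
    rintro ⟨p, q⟩
    simp only [hS1, hS2, hS3, mem_filter, mem_univ, true_and, mem_sdiff, Equiv.prodComm_apply,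
      Prod.swap_prod_mk]
    constructor
    · rintro ⟨⟨h1, h2, h3, h4⟩, h5⟩
      refine ⟨⟨h2, h4, h3, (htri p q h3 h4 h1.ne).resolve_right h5⟩,
        fun h => absurd h.1 (not_lt.mpr h1.le)⟩
    · rintro ⟨⟨h2, h4, h3, h5⟩, h6⟩
      refine ⟨⟨?_, h2, h3, h4⟩, hasym _ _ h5⟩
      rcases lt_trichotomy p q with h | h | h
      · exact h
      · subst h; exact absurd h2 (lt_irrefl _)
      · exact absurd ⟨h, h4, h3, h5⟩ h6
  have h3 : S3.card = (S1 \ S2).card + (S2 \ S1).card := by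
    rw [← h3b, ← h3a]
    exact (Finset.card_filter_add_card_filter_not _).symm
  refine ⟨(S1 ∩ S2).card, ?_⟩
  have e1 := Finset.card_sdiff_add_card_inter S1 S2
  have e2 := Finset.card_sdiff_add_card_inter S2 S1
  rw [Finset.inter_comm] at e2
  omega

theorem swap_parity {d : ℕ} (O : Fin d → Prop) (k l : Fin d) (hkl : k < l) (hk : O k) (hl : O l) :
    Odd (univ.filter fun pq : Fin d × Fin d =>
        pq.1 < pq.2 ∧ (Equiv.swap k l)⁻¹ pq.2 < (Equiv.swap k l)⁻¹ pq.1 ∧ O pq.1 ∧ O pq.2).card := by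
  set M : Finset (Fin d) := univ.filter (fun x => k < x ∧ x < l ∧ O x) with hM
  have h : (univ.filter fun pq : Fin d × Fin d =>
        pq.1 < pq.2 ∧ (Equiv.swap k l)⁻¹ pq.2 < (Equiv.swap k l)⁻¹ pq.1 ∧ O pq.1 ∧ O pq.2)
      = insert (k, l) (M.image (fun x => (k, x)) ∪ M.image (fun x => (x, l))) := by
    ext ⟨p, q⟩
    simp only [mem_filter, mem_univ, true_and, mem_insert, mem_union, mem_image,
      hM, Prod.mk.injEq]
    simp only [Equiv.swap_inv, Equiv.swap_apply_def]
    constructor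
    · rintro ⟨h1, h2, h3, h4⟩
      by_cases hp : p = k
      · by_cases hq : q = l
        · left; exact ⟨hp, hq⟩
        · right; left
          refine ⟨q, ⟨hp ▸ h1, ?_, h4⟩, hp.symm, rfl⟩
          have : q ≠ k := fun h => by omega
          simp only [hp, hq, this, if_true, if_false] at h2
          exact h2
      · by_cases hq : q = l
        · right; right
          refine ⟨p, ⟨?_, hq ▸ h1, h3⟩, rfl, hq.symm⟩
          have h5 : p ≠ l := fun h => by omega
          have h6 : l ≠ k := fun h => by omega
          simp only [hp, hq, h5, h6, if_true, if_false] at h2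
          exact h2
        · exfalso
          split_ifs at h2 <;> omega
    · rintro (⟨rfl, rfl⟩ | ⟨x, ⟨h1, h2, h3⟩, rfl, rfl⟩ | ⟨x, ⟨h1, h2, h3⟩, rfl, rfl⟩)
      · have h6 : q ≠ p := fun h => by omega
        simp [hkl, hk, hl, h6]
      · have h6 : x ≠ k := fun h => by omega
        have h7 : x ≠ l := fun h => by omega
        simp [h1, h2, h3, hk, h6, h7]
      · have h6 : x ≠ k := fun h => by omega
        have h7 : x ≠ l := fun h => by omega
        have h8 : l ≠ k := fun h => by omega
        simp [h1, h2, h3, hl, h6, h7, h8]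
  rw [h, Finset.card_insert_of_notMem, Finset.card_union_of_disjoint,
    Finset.card_image_of_injective, Finset.card_image_of_injective]
  · exact ⟨M.card, by omega⟩
  · intro x y h; exact (Prod.mk.inj h).1
  · intro x y h; exact (Prod.mk.inj h).2
  · rw [Finset.disjoint_left]
    rintro ⟨p, q⟩ h1 h2
    simp only [mem_image, hM, mem_filter, mem_univ, true_and, Prod.mk.injEq] at h1 h2
    obtain ⟨x, hx, rfl, rfl⟩ := h1
    obtain ⟨y, hy, rfl, rfl⟩ := h2
    exact absurd hy.1 (lt_irrefl _)
  · simp only [mem_union, mem_image, hM, mem_filter, mem_univ, true_and, Prod.mk.injEq]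
    rintro (⟨x, hx, -, rfl⟩ | ⟨x, hx, rfl, -⟩)
    · exact absurd hx.2.1 (lt_irrefl _)
    · exact absurd hx.1 (lt_irrefl _)

end Signs

section Charac

variable {K Z I : Type} [CommRing K] [IsDomain K] [CharZero K] [Ring Z] [Algebra K Z] [Fintype I]
variable {P : GoodPair K Z I} {m : ℕ} {R : ℕ → Type} [∀ e, Ring (R e)] [∀ e, Algebra K (R e)]
  (D : Tower K Z I m R P) (ord : LinearOrder (Z × Fin m × Fin m))

/-- Sign count of a triple of words. -/
def AG (P : GoodPair K Z I) (ord : LinearOrder (Z × Fin m × Fin m)) {d : ℕ}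
    (w : WordTriple I m d) : ℕ :=
  ang P.od ord (fun k => P.bas (w.1 k)) w.2.1 w.2.2

theorem sign_eq {d : ℕ} (w : WordTriple I m d) (hw : IsTriB P w.1 w.2.1 w.2.2)
    (σ : Equiv.Perm (Fin d)) :
    (-1 : K) ^ (AG P ord (wAct w σ)) * (-1 : K) ^ (AG P ord w)
      = (-1 : K) ^ sgnc P.od σ (fun k => P.bas (w.1 k)) := by
  obtain ⟨c, hc⟩ := inv_parity ord.lt (fun k => (P.bas (w.1 k), w.2.1 k, w.2.2 k))
    (fun k => P.bas (w.1 k) ∈ P.od) (fun x y h => @lt_asymm _ ord.toPreorder _ _ h)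
    (fun p q hp hq hpq => by
      rcases @lt_trichotomy _ ord (P.bas (w.1 p), w.2.1 p, w.2.2 p)
        (P.bas (w.1 q), w.2.1 q, w.2.2 q) with h | h | h
      · exact Or.inl h
      · exfalso
        simp only [Prod.mk.injEq] at h
        refine hw p q hpq ?_ (od_bas_iff.mp hp)
        simp only [Prod.mk.injEq]
        exact ⟨P.bas.injective h.1, h.2⟩
      · exact Or.inr h) σ
  rw [← pow_add]
  have : AG P ord (wAct w σ) + AG P ord w = sgnc P.od σ (fun k => P.bas (w.1 k)) + 2 * c := by
    rw [sgnc]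
    rw [← hc]
    unfold AG ang
    have ext : ∀ (p q : Fin d × Fin d → Prop) (i1 : DecidablePred p) (i2 : DecidablePred q),
        (∀ x, p x ↔ q x) → (@Finset.filter _ p i1 univ).card = (@Finset.filter _ q i2 univ).card := by
      intro p q i1 i2 h
      congr 1
      ext x
      simp only [mem_filter, h]
    exact congrArg₂ (· + ·) (ext _ _ _ _ (fun _ => Iff.rfl)) (ext _ _ _ _ (fun _ => Iff.rfl))
  rw [this, pow_add, pow_mul]
  simp

/-- The orbit of a triple of words. -/
def orb {d : ℕ} (w : WordTriple I m d) : Finset (WordTriple I m d) :=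
  univ.image fun σ : Equiv.Perm (Fin d) => wAct w σ

theorem mem_orb {d : ℕ} {w w' : WordTriple I m d} : w' ∈ orb w ↔ ∃ σ, wAct w σ = w' := by
  simp [orb]

theorem wAct_wAct {d : ℕ} (w : WordTriple I m d) (σ τ : Equiv.Perm (Fin d)) :
    wAct (wAct w σ) τ = wAct w (σ * τ) := rfl

theorem wAct_one {d : ℕ} (w : WordTriple I m d) : wAct w 1 = w := rfl

theorem self_mem_orb {d : ℕ} (w : WordTriple I m d) : w ∈ orb w := mem_orb.mpr ⟨1, rfl⟩

theorem wAct_mem_orb {d : ℕ} {w w' : WordTriple I m d} (σ : Equiv.Perm (Fin d)) :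
    wAct w' σ ∈ orb w ↔ w' ∈ orb w := by
  rw [mem_orb, mem_orb]
  constructor
  · rintro ⟨τ, h⟩
    refine ⟨τ * σ⁻¹, ?_⟩
    rw [← wAct_wAct, h, wAct_wAct, mul_inv_cancel, wAct_one]
  · rintro ⟨τ, h⟩
    exact ⟨τ * σ, by rw [← wAct_wAct, h]⟩

theorem tri_wAct {d : ℕ} (w : WordTriple I m d) (hw : IsTriB P w.1 w.2.1 w.2.2)
    (σ : Equiv.Perm (Fin d)) :
    IsTriB P (wAct w σ).1 (wAct w σ).2.1 (wAct w σ).2.2 := by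
  intro k l hkl h
  exact hw (σ k) (σ l) (fun h => hkl (σ.injective h)) h

theorem xiB_eq {d : ℕ} (w : WordTriple I m d) :
    xiB D ord w.1 w.2.1 w.2.2 = ∑ w' ∈ orb w, ((-1 : K) ^ (AG P ord w + AG P ord w')) • D.bas d w' := by
  unfold xiB xiH
  have hinj : Function.Injective (fun w' : WordTriple I m d =>
      (((fun k => P.bas (w'.1 k)), w'.2.1, w'.2.2) : (Fin d → Z) × (Fin d → Fin m) × (Fin d → Fin m))) := by
    rintro ⟨b, r, s⟩ ⟨b', r', s'⟩ h
    simp only [Prod.mk.injEq] at h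
    obtain ⟨h1, h2, h3⟩ := h
    have : b = b' := by
      funext k
      exact P.bas.injective (congrFun h1 k)
    simp [this, h2, h3]
  have himg : (univ.image fun σ : Equiv.Perm (Fin d) =>
      ((fun k => P.bas (w.1 k)) ∘ σ, w.2.1 ∘ σ, w.2.2 ∘ σ))
      = (orb w).image (fun w' : WordTriple I m d =>
      (((fun k => P.bas (w'.1 k)), w'.2.1, w'.2.2) : (Fin d → Z) × (Fin d → Fin m) × (Fin d → Fin m))) := by
    rw [orb, Finset.image_image]
    rfl
  rw [himg, Finset.sum_image (fun x _ y _ h => hinj h)]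
  refine Finset.sum_congr rfl fun w' _ => ?_
  rw [zsg (K := K)]
  rw [show w' = (w'.1, w'.2.1, w'.2.2) from rfl, D.bas_eq]
  rfl

theorem xi_coef {d : ℕ} (w w' : WordTriple I m d) :
    (D.bas d).repr (xiB D ord w.1 w.2.1 w.2.2) w'
      = if w' ∈ orb w then (-1 : K) ^ (AG P ord w + AG P ord w') else 0 := by
  rw [xiB_eq, map_sum, Finsupp.finsetSum_apply]
  simp only [map_smul, Module.Basis.repr_self, Finsupp.smul_apply, Finsupp.single_apply,
    smul_eq_mul, mul_ite, mul_one, mul_zero]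
  rw [Finset.sum_ite_eq']

theorem act_coef' {d : ℕ} (σ : Equiv.Perm (Fin d)) (x : R d) (w : WordTriple I m d) :
    (D.bas d).repr (D.act σ x) (wAct w σ)
      = ((-1 : K) ^ sgnc P.od σ (fun k => P.bas (w.1 k))) * (D.bas d).repr x w :=
  act_coef D σ x w.1 w.2.1 w.2.2

theorem xi_inv {d : ℕ} (w : WordTriple I m d) (hw : IsTriB P w.1 w.2.1 w.2.2)
    (σ : Equiv.Perm (Fin d)) :
    D.act σ (xiB D ord w.1 w.2.1 w.2.2) = xiB D ord w.1 w.2.1 w.2.2 := by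
  apply (D.bas d).repr.injective
  ext w'
  have h : w' = wAct (wAct w' σ⁻¹) σ := by rw [wAct_wAct, inv_mul_cancel, wAct_one]
  rw [h]
  generalize wAct w' σ⁻¹ = w1
  rw [act_coef', xi_coef, xi_coef]
  simp only [wAct_mem_orb]
  split_ifs with h1
  · obtain ⟨τ, rfl⟩ := mem_orb.mp h1
    rw [← sign_eq ord _ (tri_wAct w hw τ) σ]
    simp only [pow_add]
    have hs : ((-1 : K) ^ AG P ord (wAct w τ)) * (-1 : K) ^ AG P ord (wAct w τ) = 1 := by
      rw [← pow_add, ← two_mul, pow_mul]; simp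
    linear_combination ((-1 : K) ^ AG P ord (wAct (wAct w τ) σ) * (-1 : K) ^ AG P ord w) * hs
  · rw [mul_zero]

theorem mco_wAct {d : ℕ} (w : WordTriple I m d) (σ : Equiv.Perm (Fin d)) (v : I × Fin m × Fin m) :
    mco (wAct w σ).1 (wAct w σ).2.1 (wAct w σ).2.2 v = mco w.1 w.2.1 w.2.2 v := by
  unfold mco
  apply Finset.card_equiv σ
  intro k
  simp only [mem_filter, mem_univ, true_and]
  exact Iff.rfl

theorem fac_wAct {d : ℕ} (sel : I → Prop) (w : WordTriple I m d) (σ : Equiv.Perm (Fin d)) :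
    facSel sel (wAct w σ).1 (wAct w σ).2.1 (wAct w σ).2.2 = facSel sel w.1 w.2.1 w.2.2 := by
  unfold facSel
  have : (univ.image fun k => (((wAct w σ).1 k, (wAct w σ).2.1 k, (wAct w σ).2.2 k) : I × Fin m × Fin m))
     = (univ.image fun k => ((w.1 k, w.2.1 k, w.2.2 k) : I × Fin m × Fin m)) := by
    ext v
    simp only [mem_image, mem_univ, true_and]
    constructor
    · rintro ⟨k, rfl⟩
      exact ⟨σ k, rfl⟩
    · rintro ⟨k, rfl⟩
      exact ⟨σ⁻¹ k, by simp [wAct]⟩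
  rw [this]
  refine Finset.prod_congr rfl fun v _ => ?_
  rw [mco_wAct]

/-- `[𝐛,𝐫,𝐬]^!_𝔠`. -/
def fc (P : GoodPair K Z I) {d : ℕ} (w : WordTriple I m d) : ℕ :=
  facSel (fun i => P.part i = 1) w.1 w.2.1 w.2.2

theorem mem_T_inv {d : ℕ} {x : R d} (hx : x ∈ SchurT D ord d) (σ : Equiv.Perm (Fin d)) :
    D.act σ x = x := by
  unfold SchurT at hx
  induction hx using Submodule.span_induction with
  | mem x h =>
    obtain ⟨b, r, s, h, rfl⟩ := h
    unfold eta
    rw [map_nsmul, xi_inv D ord (b, r, s) h σ]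
  | zero => simp
  | add x y _ _ hx hy => rw [map_add, hx, hy]
  | smul a x _ hx => rw [map_smul, hx]

theorem mem_T_dvd {d : ℕ} {x : R d} (hx : x ∈ SchurT D ord d) (w : WordTriple I m d) :
    (fc P w : K) ∣ (D.bas d).repr x w := by
  unfold SchurT at hx
  induction hx using Submodule.span_induction with
  | mem x h =>
    obtain ⟨b, r, s, h, rfl⟩ := h
    unfold eta
    rw [map_nsmul, Finsupp.smul_apply, xi_coef D ord (b, r, s) w]
    split_ifs with h1
    · obtain ⟨σ, rfl⟩ := mem_orb.mp h1
      rw [fc, fac_wAct, nsmul_eq_mul]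
      exact Dvd.intro _ rfl
    · simp
  | zero => simp
  | add x y _ _ hx hy => rw [map_add, Finsupp.add_apply]; exact dvd_add hx hy
  | smul a x _ hx => rw [map_smul, Finsupp.smul_apply, smul_eq_mul]; exact Dvd.dvd.mul_left hx a

theorem inv_coef_zero_iff {d : ℕ} {x : R d} (hx : ∀ σ, D.act σ x = x) (w : WordTriple I m d)
    (σ : Equiv.Perm (Fin d)) :
    (D.bas d).repr x (wAct w σ) = 0 ↔ (D.bas d).repr x w = 0 := by
  have h := act_coef' D σ x w
  rw [hx σ] at h
  rw [h]
  constructor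
  · intro h
    exact (mul_eq_zero.mp h).resolve_left (pow_ne_zero _ (neg_ne_zero.mpr one_ne_zero))
  · intro h; rw [h, mul_zero]

theorem inv_tri {d : ℕ} {x : R d} (hx : ∀ σ, D.act σ x = x) (w : WordTriple I m d)
    (hw : (D.bas d).repr x w ≠ 0) : IsTriB P w.1 w.2.1 w.2.2 := by
  have key : ∀ k l : Fin d, k < l → ((w.1 k, w.2.1 k, w.2.2 k) : I × Fin m × Fin m)
      = (w.1 l, w.2.1 l, w.2.2 l) → P.part (w.1 k) ≠ 2 := by
    intro k l hkl h h2
    simp only [Prod.mk.injEq] at h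
    have h1 := act_coef' D (Equiv.swap k l) x w
    have h3 : wAct w (Equiv.swap k l) = w := by
      have gen : ∀ {α : Type} (f : Fin d → α), f k = f l → f ∘ (Equiv.swap k l) = f := by
        intro α f hf
        funext i
        simp only [Function.comp, Equiv.swap_apply_def]
        split_ifs with h1 h2
        · rw [h1, hf]
        · rw [h2, hf]
        · rfl
      unfold wAct
      rw [gen _ h.1, gen _ h.2.1, gen _ h.2.2]
    have h4 : Odd (sgnc P.od (Equiv.swap k l) (fun k => P.bas (w.1 k))) :=
      swap_parity (fun k => P.bas (w.1 k) ∈ P.od) k l hkl (od_bas_iff.mpr h2)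
        (od_bas_iff.mpr (h.1 ▸ h2))
    rw [h3, hx, h4.neg_one_pow] at h1
    apply hw
    have : (2 : K) * (D.bas d).repr x w = 0 := by linear_combination h1
    exact (mul_eq_zero.mp this).resolve_left two_ne_zero
  intro k l hkl h
  rcases lt_or_gt_of_ne hkl with h1 | h1
  · exact key k l h1 h
  · have := key l k h1 h.symm
    simp only [Prod.mk.injEq] at h
    rw [h.1]; exact this

theorem mem_T_of {d : ℕ} (x : R d) (hx : ∀ σ, D.act σ x = x)
    (hd : ∀ w : WordTriple I m d, (fc P w : K) ∣ (D.bas d).repr x w) : x ∈ SchurT D ord d := by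
  induction hN : ((D.bas d).repr x).support.card using Nat.strong_induction_on generalizing x with
  | _ N ih =>
    by_cases h0 : ∀ w, (D.bas d).repr x w = 0
    · have : x = 0 := by
        apply (D.bas d).repr.injective
        ext w
        simp [h0]
      rw [this]; exact Submodule.zero_mem _
    · push Not at h0
      obtain ⟨w, hw⟩ := h0
      have htri := inv_tri D hx w hw
      obtain ⟨q, hq⟩ := hd w
      have heta : eta D ord w.1 w.2.1 w.2.2 ∈ SchurT D ord d :=
        Submodule.subset_span ⟨_, _, _, htri, rfl⟩
      have hs : q • eta D ord w.1 w.2.1 w.2.2 ∈ SchurT D ord d := Submodule.smul_mem _ _ heta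
      set y := q • eta D ord w.1 w.2.1 w.2.2 with hy
      have hyx : x - y ∈ SchurT D ord d := by
        have hinv : ∀ σ, D.act σ (x - y) = x - y := by
          intro σ
          rw [map_sub, hx, mem_T_inv D ord hs σ]
        have hc : ∀ w', (D.bas d).repr y w' = if w' ∈ orb w then
            (D.bas d).repr x w * (-1 : K) ^ (AG P ord w + AG P ord w') else 0 := by
          intro w'
          rw [hy, eta, map_smul, Finsupp.smul_apply, map_nsmul, Finsupp.smul_apply, xi_coef, hq]
          simp only [fc, nsmul_eq_mul, smul_eq_mul]
          split_ifs <;> ring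
        have hz : (D.bas d).repr (x - y) w = 0 := by
          rw [map_sub, Finsupp.sub_apply, hc, if_pos (self_mem_orb w), ← two_mul, pow_mul]
          simp
        refine ih _ ?_ (x - y) hinv ?_ rfl
        · rw [← hN]
          apply Finset.card_lt_card
          rw [Finset.ssubset_iff_of_subset]
          · exact ⟨w, Finsupp.mem_support_iff.mpr hw, fun h => (Finsupp.mem_support_iff.mp h) hz⟩
          · intro w' hw'
            rw [Finsupp.mem_support_iff] at hw' ⊢
            by_cases ho : w' ∈ orb w
            · obtain ⟨σ, rfl⟩ := mem_orb.mp ho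
              exact absurd ((inv_coef_zero_iff D hinv w σ).mpr hz) hw'
            · rw [map_sub, Finsupp.sub_apply, hc, if_neg ho, sub_zero] at hw'
              exact hw'
        · intro w'
          rw [map_sub, Finsupp.sub_apply]
          exact dvd_sub (hd w') (mem_T_dvd D ord hs w')
      have := Submodule.add_mem _ hyx hs
      simpa using this

end Charac


set_option linter.unusedSectionVars false

section Main

/-- The combinatorial data on `Z` used in the proof. -/
structure ZD {K Z I : Type} [CommRing K] [Ring Z] [Algebra K Z]
    (P : GoodPair K Z I) (e : Z) (J : Type) where
  idm : J → Z
  gam : J → I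
  tgt : I → J
  out : I → I
  isL : J → Prop
  e_ev : e ∈ P.ev
  e_ne : e ≠ 0
  e_idem : e * e = e
  idm_ev : ∀ j, idm j ∈ P.ev
  idm_ne : ∀ j, idm j ≠ 0
  idm_gam : ∀ j j', idm j * P.bas (gam j') = if j = j' then P.bas (gam j') else 0
  gam_E : ∀ j, P.bas (gam j) * e = P.bas (gam j)
  mulE : ∀ b, P.bas b * e = P.bas b ∨ P.bas b * e = 0
  allow : ∀ j b0, P.bas b0 * e = P.bas b0 →
    (∃ b1, P.bas b1 * P.bas (gam j) = P.bas b0) ∨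
    (∃ z b1, e * P.bas z = P.bas z ∧ P.bas z * e = P.bas z ∧ P.bas (gam j) * P.bas z = 0 ∧
      ∀ b, P.bas.repr (P.bas b * P.bas z) b1 = if b = b0 then 1 else 0)
  gen : ∀ b, P.bas b * e = P.bas b → ∃ j z, e * P.bas z = P.bas z ∧ P.bas z * e = P.bas z ∧
    P.bas (gam j) * P.bas z = P.bas b
  faith : ∀ b0 b, P.bas.repr (P.bas b * P.bas (gam (tgt b0))) (out b0) = if b = b0 then 1 else 0
  gam_part : ∀ j, P.part (gam j) ≠ 1
  nonL_out : ∀ b, ¬ isL (tgt b) → out b = b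
  nonL_part : ∀ j, ¬ isL j → P.part (gam j) ≠ 2
  nonL_uniq : ∀ b0, ¬ isL (tgt b0) → ∀ j b, ¬ isL j →
    P.bas.repr (P.bas b * P.bas (gam j)) b0 ≠ 0 → j = tgt b0
  L_part : ∀ b, isL (tgt b) → P.part b ≠ 1

variable {K Z I J : Type} [CommRing K] [IsDomain K] [CharZero K] [Ring Z] [Algebra K Z] [Fintype I]
  [Fintype J]
variable {P : GoodPair K Z I} {e : Z} (C : ZD P e J)

include C in
theorem mulE_repr (b0 : I) : (P.bas b0 * e = P.bas b0 ∧
    ∀ b, P.bas.repr (P.bas b * e) b0 = if b = b0 then 1 else 0) ∨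
    (∀ b, P.bas.repr (P.bas b * e) b0 = 0) := by
  rcases C.mulE b0 with h | h
  · left
    refine ⟨h, fun b => ?_⟩
    rcases C.mulE b with h1 | h1
    · rw [h1, Module.Basis.repr_self, Finsupp.single_apply]
    · rw [h1]
      have : b ≠ b0 := by
        rintro rfl
        exact P.bas.ne_zero b (h ▸ h1)
      simp [this]
  · right
    intro b
    rcases C.mulE b with h1 | h1
    · have : b ≠ b0 := by
        rintro rfl
        exact P.bas.ne_zero b (h1 ▸ h)
      rw [h1, Module.Basis.repr_self, Finsupp.single_apply, if_neg this]
    · rw [h1]; simp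

variable {m : ℕ} {R : ℕ → Type} [∀ e, Ring (R e)] [∀ e, Algebra K (R e)]
  (D : Tower K Z I m R P) (ord : LinearOrder (Z × Fin m × Fin m)) {d : ℕ}

include C in
theorem X_mul_e (a : Fin d → Z) (ha : ∀ k, Homog P (a k)) (r s t u : Fin d → Fin m) :
    D.X a r s * D.X (fun _ => e) t u = if s = t then D.X (fun k => a k * e) r u else 0 := by
  rw [D.X_mul _ _ _ _ _ _ ha (fun _ => Or.inl C.e_ev),
    koz_ev_right _ _ (fun _ => C.e_ev) (fun _ => C.e_ne)]
  simp

include C in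
theorem e_mul_X (a : Fin d → Z) (ha : ∀ k, Homog P (a k)) (r s t u : Fin d → Fin m) :
    D.X (fun _ => e) t u * D.X a r s = if u = r then D.X (fun k => e * a k) t s else 0 := by
  rw [D.X_mul _ _ _ _ _ _ (fun _ => Or.inl C.e_ev) ha,
    koz_ev_left _ _ (fun _ => C.e_ev) (fun _ => C.e_ne)]
  simp

include C in
theorem X_mul_xi (a : Fin d → Z) (ha : ∀ k, Homog P (a k)) (r s : Fin d → Fin m) :
    D.X a r s * xiIdem D e d = D.X (fun k => a k * e) r s := by
  unfold xiIdem
  rw [Finset.mul_sum]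
  simp only [X_mul_e C D a ha]
  simp

include C in
theorem xi_mul_X (a : Fin d → Z) (ha : ∀ k, Homog P (a k)) (r s : Fin d → Fin m) :
    xiIdem D e d * D.X a r s = D.X (fun k => e * a k) r s := by
  unfold xiIdem
  rw [Finset.sum_mul]
  simp only [e_mul_X C D a ha]
  rw [Finset.sum_ite_eq' Finset.univ r (fun x => D.X (fun k => e * a k) x s)]
  simp

include C in
theorem act_e (σ : Equiv.Perm (Fin d)) (s t : Fin d → Fin m) :
    D.act σ (D.X (fun _ => e) s t) = D.X (fun _ => e) (s ∘ σ) (t ∘ σ) := by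
  rw [D.act_X _ _ _ _ (fun _ => Or.inl C.e_ev), sgnc_ev _ _ (fun _ => C.e_ev) (fun _ => C.e_ne)]
  simp
  rfl

include C in
theorem act_xi (σ : Equiv.Perm (Fin d)) : D.act σ (xiIdem D e d) = xiIdem D e d := by
  unfold xiIdem
  rw [map_sum]
  simp only [act_e C D]
  exact Fintype.sum_equiv (Equiv.arrowCongr σ⁻¹ (Equiv.refl _)) _ _ (fun r => rfl)

theorem act_one (x : R d) : D.act 1 x = x := by
  apply (D.bas d).repr.injective
  ext w
  have h := act_coef' D 1 x w
  rw [wAct_one] at h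
  rw [h]
  have : sgnc P.od 1 (fun k => P.bas (w.1 k)) = 0 := by
    unfold sgnc
    rw [Finset.card_eq_zero, Finset.filter_eq_empty_iff]
    rintro kl - ⟨h1, h2, _⟩
    exact absurd h1 (not_lt.mpr (le_of_lt h2))
  rw [this]; simp

/-- Symmetrization. -/
def sym : R d →ₗ[K] R d := ∑ σ : Equiv.Perm (Fin d), D.act σ

theorem sym_apply (x : R d) : sym D x = ∑ σ : Equiv.Perm (Fin d), D.act σ x := by
  simp [sym]

theorem sym_inv (x : R d) (τ : Equiv.Perm (Fin d)) : D.act τ (sym D x) = sym D x := by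
  rw [sym_apply, map_sum]
  simp only [D.act_act]
  exact Fintype.sum_equiv (Equiv.mulRight τ) _ _ (fun σ => rfl)

theorem mul_sym (x q : R d) (hx : ∀ σ, D.act σ x = x) : x * sym D q = sym D (x * q) := by
  rw [sym_apply, sym_apply, Finset.mul_sum]
  refine Finset.sum_congr rfl fun σ _ => ?_
  rw [D.act_mul, hx]

theorem sym_mul (x q : R d) (hx : ∀ σ, D.act σ x = x) : sym D q * x = sym D (q * x) := by
  rw [sym_apply, sym_apply, Finset.sum_mul]
  refine Finset.sum_congr rfl fun σ _ => ?_
  rw [D.act_mul, hx]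

variable (ω : Fin d → Fin m) (hω : Function.Injective ω)

include C hω in
theorem sym_pi (q : R d) (hq : q * D.X (fun _ => e) ω ω = q) :
    sym D q * D.X (fun _ => e) ω ω = q := by
  rw [sym_apply, Finset.sum_mul, Finset.sum_eq_single 1]
  · rw [act_one, hq]
  · intro σ _ hσ
    conv_lhs => rw [← hq]
    rw [D.act_mul, act_e C, mul_assoc, X_mul_e C D _ (fun _ => Or.inl C.e_ev), if_neg, mul_zero]
    intro h
    apply hσ
    ext k
    have := hω (congrFun h k)
    simp [this]
  · simp

theorem fc_one (w : WordTriple I m d) (h : Function.Injective w.2.2) : fc P w = 1 := by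
  unfold fc facSel
  refine Finset.prod_eq_one fun v _ => ?_
  have : mco w.1 w.2.1 w.2.2 v ≤ 1 := by
    unfold mco
    rw [Finset.card_le_one]
    intro a ha b hb
    simp only [mem_filter, mem_univ, true_and] at ha hb
    have h2 := ha.trans hb.symm
    simp only [Prod.mk.injEq] at h2
    exact h h2.2.2
  interval_cases (mco w.1 w.2.1 w.2.2 v) <;> rfl

include C hω in
theorem sym_T (q : R d) (hq : q * D.X (fun _ => e) ω ω = q) : sym D q ∈ SchurT D ord d := by
  apply mem_T_of D ord _ (sym_inv D q)
  intro w
  by_cases hs : Function.Injective w.2.2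
  · rw [fc_one w hs]; simp
  · have : (D.bas d).repr (sym D q) w = 0 := by
      rw [sym_apply, map_sum, Finsupp.finsetSum_apply]
      refine Finset.sum_eq_zero fun σ _ => ?_
      rw [← hq, D.act_mul, act_e C]
      apply coef_zero_col D _ _ _ _ (fun _ => Or.inl C.e_ev) w.1 w.2.1 w.2.2
      intro h
      exact hs (h ▸ hω.comp σ.injective)
    rw [this]; simp

include C in
theorem pi_xi (s t : Fin d → Fin m) :
    D.X (fun _ => e) s t * xiIdem D e d = D.X (fun _ => e) s t := by
  rw [X_mul_xi C D _ (fun _ => Or.inl C.e_ev)]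
  simp [C.e_idem]

include C in
theorem xi_pi (s t : Fin d → Fin m) :
    xiIdem D e d * D.X (fun _ => e) s t = D.X (fun _ => e) s t := by
  rw [xi_mul_X C D _ (fun _ => Or.inl C.e_ev)]
  simp [C.e_idem]

include C in
theorem ee (s t u : Fin d → Fin m) :
    D.X (fun _ => e) s t * D.X (fun _ => e) t u = D.X (fun _ => e) s u := by
  rw [X_mul_e C D _ (fun _ => Or.inl C.e_ev)]
  simp [C.e_idem]

include C hω in
theorem sym_N (q : R d) (hq : q * D.X (fun _ => e) ω ω = q) :
    sym D q ∈ SchurT D ord d ⊓ rfix K (xiIdem D e d) := by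
  refine ⟨sym_T C D ord ω hω q hq, ?_⟩
  change sym D q * xiIdem D e d = sym D q
  rw [sym_mul D _ _ (act_xi C D)]
  conv_lhs => rw [← hq]
  rw [mul_assoc, pi_xi C, hq]

/-- Coefficients of elements of `Rπ`. -/
theorem coef_V (C : ZD P e J) (v : R d) (hv : v * D.X (fun _ => e) ω ω = v) (b : Fin d → I)
    (r t : Fin d → Fin m) (h : (D.bas d).repr v (b, r, t) ≠ 0) :
    t = ω ∧ ∀ k, P.bas (b k) * e = P.bas (b k) := by
  rw [← hv] at h
  constructor
  · by_contra h1
    exact h (coef_zero_col D v _ _ _ (fun _ => Or.inl C.e_ev) _ _ _ (fun h2 => h1 h2.symm))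
  · intro k
    rcases mulE_repr C (b k) with h1 | h1
    · exact h1.1
    · exact absurd (coef_zero_at D v _ _ _ (fun _ => Or.inl C.e_ev) _ _ _ k h1) h

include C hω in
theorem faithful (w : R d) (hw : ∀ x ∈ SchurT D ord d ⊓ rfix K (xiIdem D e d), w * x = 0) :
    w = 0 := by
  apply eq_of_coef D
  intro b r s
  rw [map_zero, Finsupp.zero_apply]
  set q := D.X (fun k => P.bas (C.gam (C.tgt (b k)))) s ω with hq
  have hqp : q * D.X (fun _ => e) ω ω = q := by
    rw [hq, X_mul_e C D _ (fun _ => homog_bas P _), if_pos rfl]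
    simp only [C.gam_E]
  have h1 := hw _ (sym_N C D ord ω hω q hqp)
  have h2 : w * q = 0 := by
    rw [← sym_pi C D ω hω q hqp, ← mul_assoc, h1, zero_mul]
  apply coef_unique_eq_zero D w (fun k => P.bas (C.gam (C.tgt (b k)))) s ω
    (fun _ => homog_bas P _) (fun k => C.out (b k)) r b (fun k b1 => C.faith (b k) b1)
  rw [← hq, h2]; simp

end Main


set_option linter.unusedSectionVars false

section Exist

variable {K Z I J : Type} [CommRing K] [IsDomain K] [CharZero K] [Ring Z] [Algebra K Z] [Fintype I]
  [Fintype J]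
variable {P : GoodPair K Z I} {e : Z} (C : ZD P e J)
variable {m : ℕ} {R : ℕ → Type} [∀ e, Ring (R e)] [∀ e, Algebra K (R e)]
  (D : Tower K Z I m R P) (ord : LinearOrder (Z × Fin m × Fin m)) {d : ℕ}
  (ω : Fin d → Fin m) (hω : Function.Injective ω)

/-- The pure tensor `v_{j,r}`. -/
def vv (C : ZD P e J) (j : Fin d → J) (r : Fin d → Fin m) : R d :=
  D.X (fun k => P.bas (C.gam (j k))) r ω

theorem vv_pi (j : Fin d → J) (r : Fin d → Fin m) :
    vv D ω C j r * D.X (fun _ => e) ω ω = vv D ω C j r := by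
  unfold vv
  rw [X_mul_e C D _ (fun _ => homog_bas P _), if_pos rfl]
  simp only [C.gam_E]

/-- Right annihilator condition implies being a left multiple. -/
theorem exists_left (j : Fin d → J) (r : Fin d → Fin m) (w : R d)
    (hw : w * D.X (fun _ => e) ω ω = w)
    (hann : ∀ c : R d, D.X (fun _ => e) ω ω * c = c → c * D.X (fun _ => e) ω ω = c →
      vv D ω C j r * c = 0 → w * c = 0) : ∃ u : R d, u * vv D ω C j r = w := by
  suffices h : w ∈ LinearMap.range (LinearMap.mulRight K (vv D ω C j r)) by
    obtain ⟨u, hu⟩ := h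
    exact ⟨u, hu⟩
  rw [← (D.bas d).sum_repr w]
  refine Submodule.sum_mem _ fun x _ => ?_
  obtain ⟨b, r', t⟩ := x
  by_cases h0 : (D.bas d).repr w (b, r', t) = 0
  · rw [h0, zero_smul]; exact Submodule.zero_mem _
  apply Submodule.smul_mem
  obtain ⟨rfl, hE⟩ := coef_V D ω C w hw b r' t h0
  have key : ∀ k, ∃ b1, P.bas b1 * P.bas (C.gam (j k)) = P.bas (b k) := by
    intro k
    rcases C.allow (j k) (b k) (hE k) with h | ⟨z, b1, hz1, hz2, hz3, hz4⟩
    · exact h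
    exfalso
    apply h0
    set a : Fin d → Z := Function.update (fun _ => e) k (P.bas z) with ha
    have hak : a k = P.bas z := by simp [ha]
    have hak' : ∀ k', k' ≠ k → a k' = e := fun k' h => by simp [ha, h]
    have hah : ∀ k', Homog P (a k') := by
      intro k'
      by_cases hk : k' = k
      · subst hk; rw [hak]; exact homog_bas P _
      · rw [hak' k' hk]; exact Or.inl C.e_ev
    refine coef_unique_eq_zero D w a t t hah (Function.update b k b1) r' b ?_ ?_
    · intro k' b'
      by_cases hk : k' = k
      · subst hk; rw [hak, Function.update_self]; exact hz4 b'
      · rw [hak' k' hk, Function.update_of_ne hk]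
        rcases mulE_repr C (b k') with h | h
        · exact h.2 b'
        · exfalso
          have := h (b k')
          rw [hE k'] at this
          simp at this
    · rw [hann (D.X a t t)]
      · simp
      · rw [e_mul_X C D _ hah, if_pos rfl]
        congr 1
        ext k'
        by_cases hk : k' = k
        · subst hk; rw [hak]; exact hz1
        · rw [hak' k' hk]; exact C.e_idem
      · rw [X_mul_e C D _ hah, if_pos rfl]
        congr 1
        ext k'
        by_cases hk : k' = k
        · subst hk; rw [hak]; exact hz2
        · rw [hak' k' hk]; exact C.e_idem
      · unfold vv
        rw [D.X_mul _ _ _ _ _ _ (fun _ => homog_bas P _) hah, if_pos rfl,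
          X_eq_zero D _ _ _ k, smul_zero]
        rw [hak]; exact hz3
  choose b1 hb1 using key
  have hm : D.X (fun k => P.bas (b1 k)) r' r * vv D t C j r
      = ((-1 : K) ^ koz P.od (fun k => P.bas (b1 k)) (fun k => P.bas (C.gam (j k)))) •
        D.bas d (b, r', t) := by
    unfold vv
    rw [D.X_mul _ _ _ _ _ _ (fun _ => homog_bas P _) (fun _ => homog_bas P _), if_pos rfl,
      zsg (K := K), D.bas_eq]
    simp only [hb1]
  have hm2 : D.bas d (b, r', t)
      = ((-1 : K) ^ koz P.od (fun k => P.bas (b1 k)) (fun k => P.bas (C.gam (j k)))) •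
        (D.X (fun k => P.bas (b1 k)) r' r * vv D t C j r) := by
    rw [hm, smul_smul, ← mul_pow]; simp
  rw [hm2]
  exact Submodule.smul_mem _ _ ⟨_, rfl⟩

/-- A right-equivariant `G` on `Rπ` is a left multiplication. -/
theorem exists_u (G : R d → R d)
    (hG : ∀ v, v * D.X (fun _ => e) ω ω = v → G v * D.X (fun _ => e) ω ω = G v)
    (hadd : ∀ v v', v * D.X (fun _ => e) ω ω = v → v' * D.X (fun _ => e) ω ω = v' →
      G (v + v') = G v + G v')
    (hsmul : ∀ (a : K) v, v * D.X (fun _ => e) ω ω = v → G (a • v) = a • G v)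
    (hmul : ∀ v c, v * D.X (fun _ => e) ω ω = v → D.X (fun _ => e) ω ω * c = c →
      c * D.X (fun _ => e) ω ω = c → G (v * c) = G v * c)
    (C : ZD P e J) :
    ∃ u : R d, ∀ v, v * D.X (fun _ => e) ω ω = v → G v = u * v := by
  have hG0 : G 0 = 0 := by
    have := hsmul 0 0 (zero_mul _)
    simpa using this
  have h1 : ∀ (j : Fin d → J) (r : Fin d → Fin m), ∃ u : R d,
      u * vv D ω C j r = G (vv D ω C j r) := by
    intro j r
    apply exists_left C D ω j r _ (hG _ (vv_pi C D ω j r))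
    intro c hc1 hc2 hc3
    rw [← hmul _ c (vv_pi C D ω j r) hc1 hc2, hc3, hG0]
  choose u' hu' using h1
  refine ⟨∑ j, ∑ r, u' j r * D.X (fun k => C.idm (j k)) r r, ?_⟩
  have hu : ∀ j0 r0, (∑ j, ∑ r, u' j r * D.X (fun k => C.idm (j k)) r r) * vv D ω C j0 r0
      = G (vv D ω C j0 r0) := by
    intro j0 r0
    have h2 : ∀ j r, D.X (fun k => C.idm (j k)) r r * vv D ω C j0 r0
        = if j = j0 then (if r = r0 then vv D ω C j0 r0 else 0) else 0 := by
      intro j r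
      unfold vv
      rw [D.X_mul _ _ _ _ _ _ (fun _ => Or.inl (C.idm_ev _)) (fun _ => homog_bas P _),
        koz_ev_left _ _ (fun _ => C.idm_ev _) (fun _ => C.idm_ne _)]
      by_cases hr : r = r0
      · subst hr
        by_cases hj : j = j0
        · subst hj; simp [C.idm_gam]
        · obtain ⟨k, hk⟩ := Function.ne_iff.mp hj
          rw [X_eq_zero D _ _ _ k]
          · simp [hj]
          · rw [C.idm_gam, if_neg hk]
      · simp [hr]
    rw [Finset.sum_mul, Finset.sum_eq_single j0]
    · rw [Finset.sum_mul, Finset.sum_eq_single r0]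
      · rw [mul_assoc, h2]; simp [hu']
      · intro r _ hr
        rw [mul_assoc, h2]; simp [hr]
      · simp
    · intro j _ hj
      rw [Finset.sum_mul]
      refine Finset.sum_eq_zero fun r _ => ?_
      rw [mul_assoc, h2]; simp [hj]
    · simp
  set u := ∑ j, ∑ r, u' j r * D.X (fun k => C.idm (j k)) r r with hudef
  let W : Submodule K (R d) :=
    { carrier := {v | v * D.X (fun _ => e) ω ω = v ∧ G v = u * v}
      add_mem' := by
        rintro x y ⟨hx1, hx2⟩ ⟨hy1, hy2⟩
        refine ⟨by rw [add_mul, hx1, hy1], ?_⟩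
        rw [hadd _ _ hx1 hy1, hx2, hy2, mul_add]
      zero_mem' := ⟨zero_mul _, by rw [hG0, mul_zero]⟩
      smul_mem' := by
        rintro a x ⟨hx1, hx2⟩
        refine ⟨by rw [smul_mul_assoc, hx1], ?_⟩
        rw [hsmul _ _ hx1, hx2, mul_smul_comm] }
  intro v hv
  suffices h : v ∈ W from h.2
  rw [← (D.bas d).sum_repr v]
  refine Submodule.sum_mem _ fun x _ => ?_
  obtain ⟨b, r', t⟩ := x
  by_cases h0 : (D.bas d).repr v (b, r', t) = 0
  · rw [h0, zero_smul]; exact Submodule.zero_mem _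
  apply Submodule.smul_mem
  obtain ⟨rfl, hE⟩ := coef_V D ω C v hv b r' t h0
  choose j z hz1 hz2 hz3 using fun k => C.gen (b k) (hE k)
  set c : R d := D.X (fun k => P.bas (z k)) t t with hc
  have hc1 : D.X (fun _ => e) t t * c = c := by
    rw [hc, e_mul_X C D _ (fun _ => homog_bas P _), if_pos rfl]; simp only [hz1]
  have hc2 : c * D.X (fun _ => e) t t = c := by
    rw [hc, X_mul_e C D _ (fun _ => homog_bas P _), if_pos rfl]; simp only [hz2]
  have hm : vv D t C j r' * c
      = ((-1 : K) ^ koz P.od (fun k => P.bas (C.gam (j k))) (fun k => P.bas (z k))) •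
        D.bas d (b, r', t) := by
    unfold vv
    rw [hc, D.X_mul _ _ _ _ _ _ (fun _ => homog_bas P _) (fun _ => homog_bas P _), if_pos rfl,
      zsg (K := K), D.bas_eq]
    simp only [hz3]
  have hm2 : D.bas d (b, r', t)
      = ((-1 : K) ^ koz P.od (fun k => P.bas (C.gam (j k))) (fun k => P.bas (z k))) •
        (vv D t C j r' * c) := by
    rw [hm, smul_smul, ← mul_pow]; simp
  rw [hm2]
  apply Submodule.smul_mem
  refine ⟨by rw [mul_assoc, hc2], ?_⟩
  rw [hmul _ _ (vv_pi C D t j r') hc1 hc2, ← hu j r', mul_assoc]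

/-- An equivariant `g` on `N` is a left multiplication by an element of the big algebra. -/
theorem exists_u_N (g : R d → R d)
    (hgN : ∀ x ∈ SchurT D ord d ⊓ rfix K (xiIdem D e d),
      g x ∈ SchurT D ord d ⊓ rfix K (xiIdem D e d))
    (hadd : ∀ x ∈ SchurT D ord d ⊓ rfix K (xiIdem D e d),
      ∀ y ∈ SchurT D ord d ⊓ rfix K (xiIdem D e d), g (x + y) = g x + g y)
    (hsmul : ∀ (a : K), ∀ x ∈ SchurT D ord d ⊓ rfix K (xiIdem D e d), g (a • x) = a • g x)
    (hmul : ∀ x ∈ SchurT D ord d ⊓ rfix K (xiIdem D e d), ∀ c ∈ SchurT D ord d,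
      xiIdem D e d * c * xiIdem D e d = c →
      x * c ∈ SchurT D ord d ⊓ rfix K (xiIdem D e d) → g (x * c) = g x * c)
    (C : ZD P e J) (hω : Function.Injective ω) :
    ∃ u : R d, (∀ x ∈ SchurT D ord d ⊓ rfix K (xiIdem D e d), g x = u * x) ∧
      ∀ σ, D.act σ u = u := by
  have star : ∀ x ∈ SchurT D ord d ⊓ rfix K (xiIdem D e d), ∀ q, xiIdem D e d * q = q →
      q * D.X (fun _ => e) ω ω = q → g x * q = g (sym D (x * q)) * D.X (fun _ => e) ω ω := by
    intro x hx q hq1 hq2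
    have hqN := sym_N C D ord ω hω q hq2
    have h1 : x * sym D q = sym D (x * q) := mul_sym D x q (mem_T_inv D ord hx.1)
    have h2 := sym_N C D ord ω hω (x * q) (by rw [mul_assoc, hq2])
    rw [← h1] at h2 ⊢
    have h3 : sym D q * xiIdem D e d = sym D q := hqN.2
    rw [hmul x hx _ hqN.1 _ h2, mul_assoc, sym_pi C D ω hω q hq2]
    rw [mul_sym D _ _ (act_xi C D), hq1, h3]
  obtain ⟨u, hu⟩ := exists_u D ω (fun v => g (sym D v) * D.X (fun _ => e) ω ω)
    (by intro v hv; rw [mul_assoc, ee C D])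
    (by
      intro v v' hv hv'
      simp only [map_add]
      rw [hadd _ (sym_N C D ord ω hω v hv) _ (sym_N C D ord ω hω v' hv'), add_mul])
    (by
      intro a v hv
      simp only [map_smul]
      rw [hsmul _ _ (sym_N C D ord ω hω v hv), smul_mul_assoc])
    (by
      intro v c hv hc1 hc2
      have h1 : xiIdem D e d * c = c := by rw [← hc1, ← mul_assoc, xi_pi C D]
      have h2 := star _ (sym_N C D ord ω hω v hv) c h1 hc2
      have h3 : sym D v * c = v * c := by
        conv_lhs => rw [← hc1, ← mul_assoc, sym_pi C D ω hω v hv]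
      rw [h3] at h2
      change g (sym D (v * c)) * _ = g (sym D v) * _ * c
      rw [← h2, mul_assoc, hc1]) C
  have hgu : ∀ x ∈ SchurT D ord d ⊓ rfix K (xiIdem D e d), g x = u * x := by
    intro x hx
    have h1 : ∀ s, g x * D.X (fun _ => e) s s = u * x * D.X (fun _ => e) s s := by
      intro s
      have h2 := star x hx (D.X (fun _ => e) s ω) (xi_pi C D s ω) (ee C D s ω ω)
      have h3 := hu (x * D.X (fun _ => e) s ω) (by rw [mul_assoc, ee C D])
      change g (sym D (x * D.X (fun _ => e) s ω)) * _ = _ at h3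
      rw [h3, ← mul_assoc] at h2
      rw [← ee C D s ω s, ← mul_assoc, h2, mul_assoc]
    have h4 : g x * xiIdem D e d = u * x * xiIdem D e d := by
      unfold xiIdem
      rw [Finset.mul_sum, Finset.mul_sum]
      exact Finset.sum_congr rfl fun s _ => h1 s
    have h5 : g x * xiIdem D e d = g x := (hgN x hx).2
    have h6 : x * xiIdem D e d = x := hx.2
    rw [← h5, h4, mul_assoc, h6]
  refine ⟨u, hgu, fun σ => ?_⟩
  rw [← sub_eq_zero]
  apply faithful C D ord ω hω
  intro x hx
  rw [sub_mul, sub_eq_zero, ← hgu x hx]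
  have h1 : D.act σ (u * x) = g x := by
    rw [← hgu x hx]; exact mem_T_inv D ord (hgN x hx).1 σ
  rw [D.act_mul, mem_T_inv D ord hx.1] at h1
  exact h1

end Exist

set_option linter.unusedSectionVars false

section Dvd

theorem ex_cols {d m : ℕ} (hdm : d ≤ m) (s : Fin d → Fin m) (L : Fin d → Prop) :
    ∃ s' : Fin d → Fin m, (∀ k, ¬ L k → s' k = s k) ∧ (∀ k l, L k → s' k = s' l → k = l) := by
  set S : Finset (Fin m) := (univ.filter fun k => ¬ L k).image s with hS
  have h1 : S.card ≤ (univ.filter fun k => ¬ L k).card := Finset.card_image_le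
  have h2 : (univ.filter fun k => L k).card + (univ.filter fun k => ¬ L k).card = d := by
    rw [Finset.card_filter_add_card_filter_not]; simp
  have h3 : Sᶜ.card = m - S.card := by rw [Finset.card_compl]; simp
  have h4 : Fintype.card {k // L k} ≤ Fintype.card {x // x ∈ Sᶜ} := by
    rw [Fintype.card_subtype, Fintype.card_coe, h3]; omega
  obtain ⟨f⟩ := Function.Embedding.nonempty_of_card_le h4
  have hf : ∀ k l (hk : L k), ¬ L l → (f ⟨k, hk⟩ : Fin m) ≠ s l := by
    intro k l hk hl h
    have h5 := (f ⟨k, hk⟩).2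
    rw [Finset.mem_compl] at h5
    apply h5
    rw [h, hS]
    exact Finset.mem_image_of_mem _ (by simp [hl])
  refine ⟨fun k => if h : L k then f ⟨k, h⟩ else s k, fun k hk => by simp [hk], ?_⟩
  intro k l hk h
  by_cases hl : L l
  · simp only [hk, hl, dite_true] at h
    have := f.injective (Subtype.ext h)
    simpa using this
  · simp only [hk, hl, dite_true, dite_false] at h
    exact absurd h (hf k l hk hl)

variable {K Z I J : Type} [CommRing K] [IsDomain K] [CharZero K] [Ring Z] [Algebra K Z] [Fintype I]
  [Fintype J]
variable {P : GoodPair K Z I} {e : Z} (C : ZD P e J)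
variable {m : ℕ} {R : ℕ → Type} [∀ e, Ring (R e)] [∀ e, Algebra K (R e)]
  (D : Tower K Z I m R P) (ord : LinearOrder (Z × Fin m × Fin m)) {d : ℕ}

theorem facSel_dvd (sel : I → Prop) (b b' : Fin d → I) (r s s' : Fin d → Fin m)
    (h : ∀ k, sel (b k) → b' k = b k ∧ s' k = s k) :
    facSel sel b r s ∣ facSel sel b' r s' := by
  unfold facSel
  refine dvd_trans (Finset.prod_dvd_prod_of_dvd _
    (fun w => Nat.factorial (mco b' r s' w)) ?_) (Finset.prod_dvd_prod_of_subset _ _ _ ?_)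
  · rintro ⟨b0, r0, s0⟩ hw
    rw [mem_filter] at hw
    apply Nat.factorial_dvd_factorial
    unfold mco
    apply Finset.card_le_card
    intro k hk
    rw [mem_filter] at hk ⊢
    refine ⟨mem_univ _, ?_⟩
    have h2 := hk.2
    simp only [Prod.mk.injEq] at h2
    have h3 := h k (by rw [h2.1]; exact hw.2)
    rw [← hk.2, h3.1, h3.2]
  · intro w hw
    rw [mem_filter] at hw ⊢
    refine ⟨?_, hw.2⟩
    rw [mem_image] at hw ⊢
    obtain ⟨⟨k, _, hk⟩, hw2⟩ := hw
    refine ⟨k, mem_univ _, ?_⟩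
    have h3 := h k (by rw [← hk] at hw2; exact hw2)
    rw [← hk, h3.1, h3.2]

theorem facSel_one (sel : I → Prop) (b : Fin d → I) (r s : Fin d → Fin m)
    (h : ∀ k, ¬ sel (b k)) : facSel sel b r s = 1 := by
  unfold facSel
  apply Finset.prod_eq_one
  intro v hv
  exfalso
  rw [mem_filter, mem_image] at hv
  obtain ⟨⟨k, _, hk⟩, hv2⟩ := hv
  rw [← hk] at hv2
  exact h _ hv2

theorem fc_dvd (b b' : Fin d → I) (r s s' : Fin d → Fin m)
    (h : ∀ k, P.part (b k) = 1 → b' k = b k ∧ s' k = s k) :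
    fc P (b, r, s) ∣ fc P (b', r, s') :=
  facSel_dvd _ b b' r s s' h

theorem u_dvd (hdm : d ≤ m) (u : R d)
    (hu : ∀ y ∈ SchurT D ord d ⊓ rfix K (xiIdem D e d), u * y ∈ SchurT D ord d)
    (C : ZD P e J) (w : WordTriple I m d) : (fc P w : K) ∣ (D.bas d).repr u w := by
  obtain ⟨b, r, s⟩ := w
  obtain ⟨s', hs1, hs2⟩ := ex_cols hdm s (fun k => C.isL (C.tgt (b k)))
  set y0 : WordTriple I m d := (fun k => C.gam (C.tgt (b k)), s, s') with hy0
  have htri : IsTriB P y0.1 y0.2.1 y0.2.2 := by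
    intro k l hkl h h2
    have hL : C.isL (C.tgt (b k)) := by
      by_contra h3
      exact C.nonL_part _ h3 h2
    simp only [Prod.mk.injEq] at h
    exact hkl (hs2 k l hL h.2.2)
  have hfc : facSel (fun i => P.part i = 1) y0.1 y0.2.1 y0.2.2 = 1 := 
    facSel_one _ _ _ _ (fun k => C.gam_part _)
  have hyT : xiB D ord y0.1 y0.2.1 y0.2.2 ∈ SchurT D ord d := by
    apply Submodule.subset_span
    refine ⟨_, _, _, htri, ?_⟩
    unfold eta
    rw [hfc, one_smul]
  have hyX : xiB D ord y0.1 y0.2.1 y0.2.2 * xiIdem D e d = xiB D ord y0.1 y0.2.1 y0.2.2 := by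
    rw [xiB_eq, Finset.sum_mul]
    refine Finset.sum_congr rfl fun w' hw' => ?_
    obtain ⟨σ, rfl⟩ := mem_orb.mp hw'
    rw [smul_mul_assoc]
    congr 1
    unfold wAct
    rw [D.bas_eq, X_mul_xi C D _ (fun _ => homog_bas P _)]
    congr 1
    ext k
    exact C.gam_E _
  have h1 := mem_T_dvd D ord (hu _ ⟨hyT, hyX⟩) (fun k => C.out (b k), r, s')
  have h2 : (D.bas d).repr (u * xiB D ord y0.1 y0.2.1 y0.2.2) (fun k => C.out (b k), r, s')
      = ((-1 : K) ^ koz P.od (fun k => P.bas (b k)) (fun k => P.bas (C.gam (C.tgt (b k))))) *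
        (D.bas d).repr u (b, r, s) := by
    rw [xiB_eq, Finset.mul_sum, map_sum, Finsupp.finsetSum_apply, Finset.sum_eq_single y0]
    · rw [mul_smul_comm, map_smul, Finsupp.smul_apply, ← two_mul, pow_mul]
      simp only [even_two, Even.neg_pow, one_pow, one_smul]
      rw [hy0, D.bas_eq]
      exact coef_unique D u _ s s' (fun _ => homog_bas P _) _ r b (fun k b1 => C.faith (b k) b1)
    · intro w' hw' hne
      obtain ⟨σ, rfl⟩ := mem_orb.mp hw'
      rw [mul_smul_comm, map_smul, Finsupp.smul_apply]
      suffices h : (D.bas d).repr (u * D.bas d (wAct y0 σ)) (fun k => C.out (b k), r, s') = 0 by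
        rw [h, smul_zero]
      have hb : D.bas d (wAct y0 σ)
          = D.X (fun k => P.bas (C.gam (C.tgt (b (σ k))))) (s ∘ σ) (s' ∘ σ) := by
        unfold wAct
        rw [D.bas_eq]; rfl
      rw [hb]
      by_cases hcol : s' ∘ σ = s'
      · have hfix : ∀ k, C.isL (C.tgt (b k)) → σ k = k := by
          intro k hk
          exact (hs2 k (σ k) hk (congrFun hcol k).symm).symm
        have hnL : ∀ k, ¬ C.isL (C.tgt (b k)) → ¬ C.isL (C.tgt (b (σ k))) := by
          intro k hk h
          have := σ.injective (hfix _ h)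
          rw [this] at h
          exact hk h
        by_cases hall : ∀ k, C.tgt (b (σ k)) = C.tgt (b k)
        · exfalso
          apply hne
          unfold wAct
          rw [hy0]
          refine Prod.ext ?_ (Prod.ext ?_ hcol)
          · ext k
            change C.gam (C.tgt (b (σ k))) = C.gam (C.tgt (b k))
            rw [hall k]
          · funext k
            change s (σ k) = s k
            by_cases hk : C.isL (C.tgt (b k))
            · rw [hfix k hk]
            · rw [← hs1 k hk, ← hs1 _ (hnL k hk)]
              exact congrFun hcol k
        · push Not at hall
          obtain ⟨k, hk⟩ := hall
          have hkL : ¬ C.isL (C.tgt (b k)) := by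
            intro h
            rw [hfix k h] at hk
            exact hk rfl
          apply coef_zero_at D u _ _ _ (fun _ => homog_bas P _) _ _ _ k
          intro b1
          by_contra h3
          rw [C.nonL_out _ hkL] at h3
          exact hk (C.nonL_uniq (b k) hkL _ b1 (hnL k hkL) h3)
      · exact coef_zero_col D u _ _ _ (fun _ => homog_bas P _) _ _ _ hcol
    · intro h
      exact absurd (self_mem_orb y0) h
  rw [h2] at h1
  have h3 : (fc P (b, r, s) : K) ∣ (fc P (fun k => C.out (b k), r, s') : K) := by
    have := fc_dvd (P := P) b (fun k => C.out (b k)) r s s' (by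
      intro k hk
      have : ¬ C.isL (C.tgt (b k)) := fun h => C.L_part _ h hk
      exact ⟨C.nonL_out _ this, hs1 k this⟩)
    exact_mod_cast (Nat.cast_dvd_cast (α := K) this)
  have h4 := h3.trans h1
  rcases neg_one_pow_eq_or K
    (koz P.od (fun k => P.bas (b k)) (fun k => P.bas (C.gam (C.tgt (b k))))) with h | h
  · rwa [h, one_mul] at h4
  · rw [h, neg_one_mul, dvd_neg] at h4
    exact h4

theorem dci_T (C : ZD P e J) (hdm : d ≤ m) : IsDCI K (SchurT D ord d) (xiIdem D e d) := by
  have hω : Function.Injective (Fin.castLE hdm) := Fin.castLE_injective hdm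
  refine ⟨?_, ?_⟩
  · intro s _ s' _ h
    rw [← sub_eq_zero]
    apply faithful C D ord _ hω
    intro x hx
    rw [sub_mul, h x hx, sub_self]
  · intro f hf
    set g : R d → R d := fun x =>
      if h : x ∈ SchurT D ord d ⊓ rfix K (xiIdem D e d) then (f ⟨x, h⟩ : R d) else 0 with hg
    have hgf : ∀ x (h : x ∈ SchurT D ord d ⊓ rfix K (xiIdem D e d)), g x = f ⟨x, h⟩ := by
      intro x h
      simp only [hg]
      rw [dif_pos h]
    have hgN : ∀ x ∈ SchurT D ord d ⊓ rfix K (xiIdem D e d),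
        g x ∈ SchurT D ord d ⊓ rfix K (xiIdem D e d) := by
      intro x hx
      rw [hgf x hx]; exact (f ⟨x, hx⟩).2
    obtain ⟨u, hu, hinv⟩ := exists_u_N D ord (Fin.castLE hdm) g hgN
      (by
        intro x hx y hy
        rw [hgf x hx, hgf y hy, hgf _ (Submodule.add_mem _ hx hy), ← Submodule.coe_add, ← map_add]
        rfl)
      (by
        intro a x hx
        rw [hgf x hx, hgf _ (Submodule.smul_mem _ a hx), ← Submodule.coe_smul, ← map_smul]
        rfl)
      (by
        intro x hx c hc1 hc2 hxc
        rw [hgf x hx, hgf _ hxc]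
        exact hf ⟨x, hx⟩ c hc1 hc2 hxc) C hω
    refine ⟨u, ?_, ?_⟩
    · apply mem_T_of D ord u hinv
      intro w
      apply u_dvd D ord hdm u _ C
      intro y hy
      rw [← hu y hy]; exact (hgN y hy).1
    · intro x
      rw [← hu _ x.2, hgf _ x.2]

end Dvd

set_option linter.unusedSectionVars false

section PartOne

variable {K Z I J : Type} [CommRing K] [IsDomain K] [CharZero K] [Ring Z] [Algebra K Z] [Fintype I]
  [Fintype J]
variable {P : GoodPair K Z I} {e : Z}

theorem zcoef (x a : Z) (b' : I) :
    P.bas.repr (x * a) b' = ∑ b, P.bas.repr x b * P.bas.repr (P.bas b * a) b' := by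
  conv_lhs => rw [← P.bas.sum_repr x]
  rw [Finset.sum_mul, map_sum, Finsupp.finsetSum_apply]
  refine Finset.sum_congr rfl fun b _ => ?_
  rw [smul_mul_assoc, map_smul, Finsupp.smul_apply, smul_eq_mul]

theorem zcoef_unique (x a : Z) (b' b0 : I)
    (h : ∀ b, P.bas.repr (P.bas b * a) b' = if b = b0 then 1 else 0) :
    P.bas.repr (x * a) b' = P.bas.repr x b0 := by
  rw [zcoef]
  simp [h]

theorem zcoef_E (C : ZD P e J) (x : Z) (hx : x * e = x) (b : I) (h : P.bas.repr x b ≠ 0) :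
    P.bas b * e = P.bas b := by
  rcases mulE_repr C b with h1 | h1
  · exact h1.1
  · exfalso
    apply h
    rw [← hx, zcoef]
    simp [h1]

theorem dci_Z (C : ZD P e J) : IsDCI K (⊤ : Submodule K Z) e := by
  refine ⟨?_, ?_⟩
  · intro s _ s' _ h
    rw [← sub_eq_zero]
    apply P.bas.repr.injective
    ext b
    rw [map_zero, Finsupp.zero_apply, ← zcoef_unique (s - s') _ (C.out b) b (C.faith b),
      sub_mul, h _ ⟨trivial, C.gam_E _⟩, sub_self, map_zero, Finsupp.zero_apply]
  · intro f hf
    have hmem : ∀ x, x * e = x → x ∈ (⊤ : Submodule K Z) ⊓ rfix K e := fun x h => ⟨trivial, h⟩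
    have hfe : ∀ x, (f x : Z) * e = f x := fun x => (f x).2.2
    have hmul : ∀ (x : Z) (hx : x * e = x) (z : Z) (h1 : e * z = z) (h2 : z * e = z),
        (f ⟨x * z, hmem _ (by rw [mul_assoc, h2])⟩ : Z) = f ⟨x, hmem x hx⟩ * z := by
      intro x hx z h1 h2
      exact hf ⟨x, hmem x hx⟩ z trivial (by rw [h1, h2]) _
    have key : ∀ j, ∃ s, s * P.bas (C.gam j) = f ⟨P.bas (C.gam j), hmem _ (C.gam_E j)⟩ := by
      intro j
      set w : Z := ((f ⟨P.bas (C.gam j), hmem _ (C.gam_E j)⟩ : ↥((⊤ : Submodule K Z) ⊓ rfix K e)) : Z) with hw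
      have hwe : w * e = w := hfe _
      suffices h : w ∈ LinearMap.range (LinearMap.mulRight K (P.bas (C.gam j))) by
        obtain ⟨u, hu⟩ := h
        exact ⟨u, hu⟩
      rw [← P.bas.sum_repr w]
      refine Submodule.sum_mem _ fun b _ => ?_
      by_cases h0 : P.bas.repr w b = 0
      · rw [h0, zero_smul]; exact Submodule.zero_mem _
      apply Submodule.smul_mem
      rcases C.allow j b (zcoef_E C w hwe b h0) with ⟨b1, h⟩ | ⟨z, b1, hz1, hz2, hz3, hz4⟩
      · exact ⟨P.bas b1, h⟩
      · exfalso
        apply h0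
        rw [← zcoef_unique w _ b1 b hz4, hw, ← hmul _ (C.gam_E j) _ hz1 hz2]
        have : (⟨P.bas (C.gam j) * P.bas z, hmem _ (by rw [mul_assoc, hz2])⟩ :
            ↥((⊤ : Submodule K Z) ⊓ rfix K e)) = 0 := Subtype.ext hz3
        rw [this, map_zero]
        simp
    choose s' hs' using key
    refine ⟨∑ j, s' j * C.idm j, trivial, ?_⟩
    have hs : ∀ j, (∑ j, s' j * C.idm j) * P.bas (C.gam j)
        = f ⟨P.bas (C.gam j), hmem _ (C.gam_E j)⟩ := by
      intro j
      rw [Finset.sum_mul, Finset.sum_eq_single j]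
      · rw [mul_assoc, C.idm_gam, if_pos rfl, hs']
      · intro j' _ hj
        rw [mul_assoc, C.idm_gam, if_neg hj, mul_zero]
      · simp
    set s := ∑ j, s' j * C.idm j with hsdef
    let W : Submodule K Z :=
      { carrier := {v | ∃ h : v * e = v, (f ⟨v, hmem v h⟩ : Z) = s * v}
        add_mem' := by
          rintro x y ⟨hx1, hx2⟩ ⟨hy1, hy2⟩
          refine ⟨by rw [add_mul, hx1, hy1], ?_⟩
          rw [mul_add, ← hx2, ← hy2, ← Submodule.coe_add, ← map_add]
          rfl
        zero_mem' := ⟨zero_mul _, by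
          have : (⟨0, hmem 0 (zero_mul _)⟩ : ↥((⊤ : Submodule K Z) ⊓ rfix K e)) = 0 := rfl
          rw [this, map_zero, mul_zero]; rfl⟩
        smul_mem' := by
          rintro a x ⟨hx1, hx2⟩
          refine ⟨by rw [smul_mul_assoc, hx1], ?_⟩
          rw [mul_smul_comm, ← hx2, ← Submodule.coe_smul, ← map_smul]
          rfl }
    rintro ⟨v, hv⟩
    have hve : v * e = v := hv.2
    suffices h : v ∈ W from h.2
    rw [← P.bas.sum_repr v]
    refine Submodule.sum_mem _ fun b _ => ?_
    by_cases h0 : P.bas.repr v b = 0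
    · rw [h0, zero_smul]; exact Submodule.zero_mem _
    apply Submodule.smul_mem
    obtain ⟨j, z, hz1, hz2, hz3⟩ := C.gen b (zcoef_E C v hve b h0)
    rw [← hz3]
    refine ⟨by rw [mul_assoc, hz2], ?_⟩
    rw [hmul _ (C.gam_E j) _ hz1 hz2, ← hs j, mul_assoc]

end PartOne

set_option linter.unusedSectionVars false

section Concrete

/-- Index type of the standard basis. -/
abbrev IX (N : ℕ) : Type := Fin (N + 1 + 1) ⊕ (Fin (N + 1) ⊕ (Fin (N + 1) ⊕ Fin (N + 1)))

/-- Right vertex. -/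
def tg {N : ℕ} : IX N → Fin (N + 1 + 1)
  | .inl i => i
  | .inr (.inl j) => Fin.castSucc j
  | .inr (.inr (.inl j)) => Fin.succ j
  | .inr (.inr (.inr j)) => Fin.castSucc j

/-- Left vertex. -/
def lf {N : ℕ} : IX N → Fin (N + 1 + 1)
  | .inl i => i
  | .inr (.inl j) => Fin.castSucc j
  | .inr (.inr (.inl j)) => Fin.castSucc j
  | .inr (.inr (.inr j)) => Fin.succ j

/-- The chosen generator of `Ze` at a left vertex. -/
def gm {N : ℕ} (j : Fin (N + 1 + 1)) : IX N :=
  if j = Fin.last (N + 1) then .inr (.inr (.inr (Fin.last N))) else .inl j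

/-- Detecting basis element. -/
def ot {N : ℕ} (b : IX N) : IX N :=
  if b = .inl (Fin.last (N + 1)) then .inr (.inr (.inr (Fin.last N)))
  else if b = .inr (.inr (.inl (Fin.last N))) then .inr (.inl (Fin.last N)) else b

theorem gm_ne {N : ℕ} {j : Fin (N + 1 + 1)} (h : j ≠ Fin.last (N + 1)) : gm j = .inl j := if_neg h

theorem gm_last {N : ℕ} : gm (Fin.last (N + 1)) = .inr (.inr (.inr (Fin.last N))) := if_pos rfl

theorem cs_ne {N : ℕ} (j : Fin (N + 1)) : Fin.castSucc j ≠ Fin.last (N + 1) :=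
  (Fin.castSucc_lt_last j).ne

theorem lf_gm {N : ℕ} (j : Fin (N + 1 + 1)) : lf (gm j) = j := by
  by_cases h : j = Fin.last (N + 1)
  · subst h; rw [gm_last]; rfl
  · rw [gm_ne h]; rfl

theorem tg_gm {N : ℕ} (j : Fin (N + 1 + 1)) : tg (gm j) ≠ Fin.last (N + 1) := by
  by_cases h : j = Fin.last (N + 1)
  · subst h; rw [gm_last]; exact cs_ne _
  · rw [gm_ne h]; exact h

theorem tg_last {N : ℕ} (b : IX N) (h : tg b = Fin.last (N + 1)) :
    b = .inl (Fin.last (N + 1)) ∨ b = .inr (.inr (.inl (Fin.last N))) := by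
  rcases b with i | j | j | j
  · left; exact congrArg _ h
  · exact absurd h (cs_ne j)
  · right
    have : j = Fin.last N := Fin.succ_injective _ h
    rw [this]
  · exact absurd h (cs_ne j)

theorem ot_ne {N : ℕ} (b : IX N) (h : tg b ≠ Fin.last (N + 1)) : ot b = b := by
  unfold ot
  rw [if_neg, if_neg]
  · rintro rfl; exact h rfl
  · rintro rfl; exact h rfl

variable {K Z : Type} [CommRing K] [IsDomain K] [CharZero K] [Ring Z] [Algebra K Z] {N : ℕ}

theorem mkZD (P : GoodPair K Z (IX N)) (e : Z)
    (hE : e = ∑ j : Fin (N + 1), P.bas (.inl (Fin.castSucc j)))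
    (her : ∀ b i, P.bas b * P.bas (.inl i) = if tg b = i then P.bas b else 0)
    (hel : ∀ b i, P.bas (.inl i) * P.bas b = if lf b = i then P.bas b else 0)
    (hU : ∀ b j, P.bas b * P.bas (.inr (.inr (.inr j))) =
      if b = .inl (Fin.succ j) then P.bas (.inr (.inr (.inr j)))
      else if b = .inr (.inr (.inl j)) then P.bas (.inr (.inl j)) else 0)
    (hC : ∀ b j, P.bas b * P.bas (.inr (.inl j)) =
      if b = .inl (Fin.castSucc j) then P.bas (.inr (.inl j)) else 0)
    (hp : ∀ g, P.part g
      = Sum.elim (fun _ => (0 : Fin 3)) (Sum.elim (fun _ => 1) (fun _ => 2)) g) :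
    Nonempty (ZD P e (Fin (N + 1 + 1))) := by
  have hbe : ∀ b, tg b ≠ Fin.last (N + 1) → P.bas b * e = P.bas b := by
    intro b hb
    obtain ⟨j, hj⟩ := Fin.exists_castSucc_eq.mpr hb
    rw [hE, Finset.mul_sum, Finset.sum_eq_single j]
    · rw [her, if_pos hj.symm]
    · intro j' _ hj'
      rw [her, if_neg]
      rw [← hj]
      exact fun h => hj' (Fin.castSucc_injective _ h).symm
    · simp
  have hbe0 : ∀ b, tg b = Fin.last (N + 1) → P.bas b * e = 0 := by
    intro b hb
    rw [hE, Finset.mul_sum]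
    refine Finset.sum_eq_zero fun j _ => ?_
    rw [her, if_neg]
    rw [hb]; exact (cs_ne j).symm
  have hbE : ∀ b, P.bas b * e = P.bas b → tg b ≠ Fin.last (N + 1) := by
    intro b h1 h2
    exact P.bas.ne_zero b (h1.symm.trans (hbe0 b h2))
  have heb : ∀ b, lf b ≠ Fin.last (N + 1) → e * P.bas b = P.bas b := by
    intro b hb
    obtain ⟨j, hj⟩ := Fin.exists_castSucc_eq.mpr hb
    rw [hE, Finset.sum_mul, Finset.sum_eq_single j]
    · rw [hel, if_pos hj.symm]
    · intro j' _ hj'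
      rw [hel, if_neg]
      rw [← hj]
      exact fun h => hj' (Fin.castSucc_injective _ h).symm
    · simp
  have rE : ∀ b b0, P.bas.repr (P.bas b * P.bas (.inl (tg b0))) b0 = if b = b0 then 1 else 0 := by
    intro b b0
    rw [her]
    by_cases h : b = b0
    · subst h; simp
    · split_ifs <;> simp [h]
  have viaE : ∀ g b0, tg b0 ≠ Fin.last (N + 1) → tg g ≠ tg b0 →
      ∃ z b1, e * P.bas z = P.bas z ∧ P.bas z * e = P.bas z ∧ P.bas g * P.bas z = 0 ∧
      ∀ b, P.bas.repr (P.bas b * P.bas z) b1 = if b = b0 then 1 else 0 := by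
    intro g b0 h1 h2
    refine ⟨.inl (tg b0), b0, heb _ h1, hbe _ h1, ?_, fun b => rE b b0⟩
    rw [her, if_neg h2]
  refine ⟨{
    idm := fun j => P.bas (.inl j)
    gam := gm
    tgt := tg
    out := ot
    isL := fun j => j = Fin.last (N + 1)
    e_ev := ?_
    e_ne := ?_
    e_idem := ?_
    idm_ev := ?_
    idm_ne := fun j => P.bas.ne_zero _
    idm_gam := ?_
    gam_E := fun j => hbe _ (tg_gm j)
    mulE := ?_
    allow := ?_
    gen := ?_
    faith := ?_
    gam_part := ?_
    nonL_out := fun b h => ot_ne b h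
    nonL_part := ?_
    nonL_uniq := ?_
    L_part := ?_ }⟩
  · rw [hE]
    refine Submodule.sum_mem _ fun j _ => bas_ev ?_
    rw [hp]; simp
  · intro h
    have h1 := heb (.inl (Fin.castSucc 0)) (cs_ne 0)
    rw [h, zero_mul] at h1
    exact P.bas.ne_zero _ h1.symm
  · conv_lhs => enter [1]; rw [hE]
    rw [Finset.sum_mul]
    conv_rhs => rw [hE]
    exact Finset.sum_congr rfl fun j _ => hbe _ (cs_ne j)
  · intro j
    apply bas_ev
    rw [hp]; simp
  · intro j j'
    rw [hel, lf_gm]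
    by_cases h : j = j'
    · simp [h]
    · rw [if_neg h, if_neg (Ne.symm h)]
  · intro b
    by_cases h : tg b = Fin.last (N + 1)
    · exact Or.inr (hbe0 b h)
    · exact Or.inl (hbe b h)
  · intro j b0 hb0
    have hb := hbE b0 hb0
    by_cases hj : j = Fin.last (N + 1)
    · subst hj
      rw [gm_last]
      by_cases ht : tg (.inr (.inr (.inr (Fin.last N))) : IX N) = tg b0
      · rcases b0 with i | i | i | i
        · right
          refine ⟨.inr (.inl (Fin.last N)), .inr (.inl (Fin.last N)), heb _ (cs_ne _),
            hbe _ (cs_ne _), ?_, ?_⟩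
          · rw [hC, if_neg (by simp)]
          · intro b
            rw [hC]
            have hi : Fin.castSucc (Fin.last N) = i := ht
            rw [hi]
            split_ifs <;> simp
        · left
          have hi : Fin.last N = i := Fin.castSucc_injective _ ht
          subst hi
          refine ⟨.inr (.inr (.inl (Fin.last N))), ?_⟩
          rw [hU, if_neg (by simp), if_pos rfl]
        · right
          have hi : Fin.succ i ≠ Fin.last (N + 1) := hb
          refine ⟨.inr (.inr (.inr i)), .inr (.inl i), heb _ hi, hbe _ (cs_ne _), ?_, ?_⟩
          · rw [hU, if_neg (by simp), if_neg (by simp)]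
          · intro b
            rw [hU]
            by_cases h1 : b = .inl (Fin.succ i)
            · subst h1; simp
            · rw [if_neg h1]
              split_ifs <;> simp
        · left
          have hi : Fin.last N = i := Fin.castSucc_injective _ ht
          subst hi
          refine ⟨.inl (Fin.last (N + 1)), ?_⟩
          rw [hU, Fin.succ_last, if_pos rfl]
      · right; convert viaE _ _ hb ht
    · rw [gm_ne hj]
      by_cases ht : tg (.inl j : IX N) = tg b0
      · left
        exact ⟨b0, by rw [her]; exact if_pos ht.symm⟩
      · right; convert viaE _ _ hb ht
  · intro b hb0
    have hb := hbE b hb0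
    by_cases hl : lf b = Fin.last (N + 1)
    · rcases b with i | i | i | i
      · exact absurd hl hb
      · exact absurd hl (cs_ne i)
      · exact absurd hl (cs_ne i)
      · have hi : i = Fin.last N := Fin.succ_injective _ hl
        subst hi
        refine ⟨Fin.last (N + 1), .inl (Fin.castSucc (Fin.last N)), heb _ (cs_ne _),
          hbe _ (cs_ne _), ?_⟩
        rw [gm_last, her]; exact if_pos rfl
    · refine ⟨lf b, b, heb b hl, hbe b hb, ?_⟩
      rw [gm_ne hl, hel, if_pos rfl]
  · intro b0 b
    by_cases h : tg b0 = Fin.last (N + 1)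
    · rw [h, gm_last, hU]
      rcases tg_last b0 h with rfl | rfl
      · have : ot (.inl (Fin.last (N + 1)) : IX N) = .inr (.inr (.inr (Fin.last N))) := if_pos rfl
        rw [this, Fin.succ_last]
        by_cases h1 : b = .inl (Fin.last (N + 1))
        · rw [if_pos h1, if_pos h1]; simp
        · rw [if_neg h1, if_neg h1]
          split_ifs <;> simp
      · have : ot (.inr (.inr (.inl (Fin.last N))) : IX N) = .inr (.inl (Fin.last N)) := by
          unfold ot
          rw [if_neg (by simp), if_pos rfl]
        rw [this]
        by_cases h1 : b = .inl (Fin.succ (Fin.last N))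
        · subst h1; simp
        · rw [if_neg h1]
          split_ifs <;> simp
    · rw [gm_ne h, ot_ne _ h]
      convert rE b b0
  · intro j
    rw [hp]
    by_cases h : j = Fin.last (N + 1)
    · subst h; rw [gm_last]; simp
    · rw [gm_ne h]; simp
  · intro j h
    rw [hp, gm_ne h]; simp
  · intro b0 h j b hj h1
    rw [gm_ne hj, her] at h1
    split_ifs at h1 with h2
    · rw [Module.Basis.repr_self, Finsupp.single_apply] at h1
      split_ifs at h1 with h3
      · rw [← h2, h3]
      · exact absurd rfl h1
    · simp at h1
  · intro b h
    rw [hp]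
    rcases tg_last b h with rfl | rfl <;> simp

end Concrete

/-- Let `𝕜` be a PID of characteristic `0` and `Z` the extended zigzag
algebra for `ℓ ≥ 1` (axiomatized by its standard basis
`{e_i} ∪ {c_j} ∪ {a_{j,j+1}} ∪ {a_{j+1,j}}` and the defining multiplication table), with the
unital good pair `(Z,𝔷)`, `𝔷 = span(e_0,…,e_ℓ)`.  Let `e := e_0 + ⋯ + e_{ℓ−1}` (so that
`eZe = Z̄` is the zigzag algebra and `ξ^e·T^Z_𝔷(n,d)·ξ^e = T^{Z̄}_{𝔷̄}(n,d)`).  Then: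
(1) `e` is a double centralizer idempotent for `Z`; and (2) if `d ≤ n` then `ξ^e` is a
double centralizer idempotent for `T^Z_𝔷(n,d)`. -/
theorem statement19 {𝕜 Z : Type} [CommRing 𝕜] [IsDomain 𝕜] [IsPrincipalIdealRing 𝕜]
    [CharZero 𝕜] [Ring Z] [Algebra 𝕜 Z]
    (ℓ : ℕ) (hℓ : 1 ≤ ℓ)
    (eI : Fin (ℓ + 1) → Z) (cC aD aU : Fin ℓ → Z)
    -- the defining relations of the extended zigzag algebra
    (hsum : ∑ i, eI i = 1)
    (hee : ∀ i j, eI i * eI j = if i = j then eI i else 0)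
    (heD : ∀ (i : Fin (ℓ + 1)) (j : Fin ℓ), eI i * aD j = if i = Fin.castSucc j then aD j else 0)
    (hDe : ∀ (i : Fin (ℓ + 1)) (j : Fin ℓ), aD j * eI i = if i = Fin.succ j then aD j else 0)
    (heU : ∀ (i : Fin (ℓ + 1)) (j : Fin ℓ), eI i * aU j = if i = Fin.succ j then aU j else 0)
    (hUe : ∀ (i : Fin (ℓ + 1)) (j : Fin ℓ), aU j * eI i = if i = Fin.castSucc j then aU j else 0)
    (hec : ∀ (i : Fin (ℓ + 1)) (j : Fin ℓ), eI i * cC j = if i = Fin.castSucc j then cC j else 0)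
    (hce : ∀ (i : Fin (ℓ + 1)) (j : Fin ℓ), cC j * eI i = if i = Fin.castSucc j then cC j else 0)
    (hDU : ∀ j j' : Fin ℓ, aD j * aU j' = if j = j' then cC j else 0)
    (hUD : ∀ j j' : Fin ℓ, aU j * aD j'
      = if j = j' then (if h : (j : ℕ) + 1 < ℓ then cC ⟨(j : ℕ) + 1, h⟩ else 0) else 0)
    (hccc : ∀ i j : Fin ℓ, cC i * cC j = 0)
    (hcd : ∀ i j : Fin ℓ, cC i * aD j = 0) (hdc : ∀ i j : Fin ℓ, aD j * cC i = 0)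
    (hcu : ∀ i j : Fin ℓ, cC i * aU j = 0) (huc : ∀ i j : Fin ℓ, aU j * cC i = 0)
    -- the good pair `(Z, 𝔷)` with its standard basis and partition
    (P : GoodPair 𝕜 Z (Fin (ℓ + 1) ⊕ (Fin ℓ ⊕ (Fin ℓ ⊕ Fin ℓ))))
    (hPbas : ∀ g, P.bas g = Sum.elim eI (Sum.elim cC (Sum.elim aD aU)) g)
    (hPpart : ∀ g, P.part g
      = Sum.elim (fun _ => (0 : Fin 3)) (Sum.elim (fun _ => 1) (fun _ => 2)) g)
    (hPaa : P.aa = Submodule.span 𝕜 (Set.range eI))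
    (hPev : P.ev = Submodule.span 𝕜 (Set.range eI ∪ Set.range cC))
    (hPod : P.od = Submodule.span 𝕜 (Set.range aD ∪ Set.range aU))
    {n : ℕ} (hn : 0 < n) {T : ℕ → Type} [∀ e, Ring (T e)] [∀ e, Algebra 𝕜 (T e)]
    (D : Tower 𝕜 Z (Fin (ℓ + 1) ⊕ (Fin ℓ ⊕ (Fin ℓ ⊕ Fin ℓ))) n T P)
    (ord : LinearOrder (Z × Fin n × Fin n)) (d : ℕ) :
    IsDCI 𝕜 (⊤ : Submodule 𝕜 Z) (∑ j : Fin ℓ, eI (Fin.castSucc j)) ∧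
    (d ≤ n → IsDCI 𝕜 (SchurT D ord d) (xiIdem D (∑ j : Fin ℓ, eI (Fin.castSucc j)) d)) := by
  obtain ⟨N, rfl⟩ : ∃ N, ℓ = N + 1 := ⟨ℓ - 1, by omega⟩
  have her : ∀ b i, P.bas b * P.bas (.inl i) = if tg b = i then P.bas b else 0 := by
    intro b i
    simp only [hPbas]
    rcases b with j | j | j | j
    · exact hee j i
    · refine (hce i j).trans ?_
      simp [tg, eq_comm]
    · refine (hDe i j).trans ?_
      simp [tg, eq_comm]
    · refine (hUe i j).trans ?_
      simp [tg, eq_comm]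
  have hel : ∀ b i, P.bas (.inl i) * P.bas b = if lf b = i then P.bas b else 0 := by
    intro b i
    simp only [hPbas]
    rcases b with j | j | j | j
    · refine (hee i j).trans ?_
      by_cases h : i = j
      · subst h; simp [lf]
      · simp [lf, h, Ne.symm h]
    · refine (hec i j).trans ?_
      simp [lf, eq_comm]
    · refine (heD i j).trans ?_
      simp [lf, eq_comm]
    · refine (heU i j).trans ?_
      simp [lf, eq_comm]
  have hUU : ∀ i j, aU i * aU j = 0 := by
    intro i j
    have h1 : aU i * aU j = eI (Fin.succ i) * (aU i * aU j) * eI (Fin.castSucc j) := by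
      rw [← mul_assoc, heU, if_pos rfl, mul_assoc, hUe, if_pos rfl]
    by_cases hij : Fin.castSucc i = Fin.succ j
    · rw [h1, ← P.bas.sum_repr (aU i * aU j), Finset.mul_sum, Finset.sum_mul]
      refine Finset.sum_eq_zero fun b _ => ?_
      rw [mul_smul_comm, smul_mul_assoc]
      have h2 : eI (Fin.succ i) * P.bas b * eI (Fin.castSucc j) = 0 := by
        have h3 := hel b (Fin.succ i)
        have h4 := her b (Fin.castSucc j)
        rw [hPbas (.inl _)] at h3 h4
        change eI (Fin.succ i) * _ = _ at h3
        change _ * eI (Fin.castSucc j) = _ at h4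
        rw [h3]
        split_ifs with h5
        · rw [h4, if_neg]
          intro h6
          have e1 := congrArg Fin.val hij
          have e2 := congrArg Fin.val h5
          have e3 := congrArg Fin.val h6
          rcases b with k | k | k | k <;> simp [lf, tg] at e1 e2 e3 <;> omega
        · exact zero_mul _
      rw [h2, smul_zero]
    · have h2 : aU i * eI (Fin.castSucc i) = aU i := by rw [hUe, if_pos rfl]
      rw [← h2, mul_assoc, heU, if_neg hij, mul_zero]
  obtain ⟨C⟩ := mkZD P (∑ j : Fin (N + 1), eI (Fin.castSucc j))
    (Finset.sum_congr rfl fun j _ => (hPbas (.inl (Fin.castSucc j))).symm) her hel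
    (by
      intro b j
      simp only [hPbas]
      rcases b with i | i | i | i
      · refine (heU i j).trans ?_
        simp
      · refine (hcu i j).trans ?_
        simp
      · refine (hDU i j).trans ?_
        by_cases h : i = j
        · subst h; simp
        · simp [h]
      · refine (hUU i j).trans ?_
        simp)
    (by
      intro b j
      simp only [hPbas]
      rcases b with i | i | i | i
      · refine (hec i j).trans ?_
        simp
      · refine (hccc i j).trans ?_
        simp
      · refine (hdc j i).trans ?_
        simp
      · refine (huc j i).trans ?_
        simp)
    hPpart
  exact ⟨dci_Z C, fun h => dci_T D ord C h⟩
end GS
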